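/- Assume h(t,x,·) is convex on ℝ^m for every (t,x), and that the optimal control problem admits an optimal admissible pair (x*,u*), unique up to equality for Lebesgue-a.e. t. If (η*, η_T*) is an optimal solution to (Q) and η̄* denotes the (t,x)-marginal of η*, then η̄* coincides with the occupation measure of x*: η̄* equals the pushforward of Lebesgue measure on [0,T] under t ↦ (t, x*(t)). -/

import Mathlib

open MeasureTheory Set ProbabilityTheory

noncomputable section

/-- The input constraint set `U = [-1,1]^m`. -/
def Ubox (m : ℕ) : Set (Fin m → ℝ) := Set.Icc (fun _ => (-1 : ℝ)) (fun _ => (1 : ℝ))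

/-- The controlled vector field `F(t,x,u) = f(t,x) + g(t,x) u`. -/
def Fvec {n m : ℕ} (f : ℝ × (Fin n → ℝ) → Fin n → ℝ)
    (g : ℝ × (Fin n → ℝ) → Fin n → Fin m → ℝ)
    (z : ℝ × (Fin n → ℝ) × (Fin m → ℝ)) : Fin n → ℝ :=
  fun k => f (z.1, z.2.1) k + ∑ j, g (z.1, z.2.1) k j * z.2.2 j

/-- `(L_F v)(t,x,u) = ∂v/∂t + Σ_k (∂v/∂x_k)·[F(t,x,u)]_k`. -/
def LFop {n m : ℕ} (f : ℝ × (Fin n → ℝ) → Fin n → ℝ)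
    (g : ℝ × (Fin n → ℝ) → Fin n → Fin m → ℝ)
    (v : ℝ × (Fin n → ℝ) → ℝ) (z : ℝ × (Fin n → ℝ) × (Fin m → ℝ)) : ℝ :=
  fderiv ℝ v (z.1, z.2.1) ((1 : ℝ), (0 : Fin n → ℝ)) +
    ∑ k, fderiv ℝ v (z.1, z.2.1) ((0 : ℝ), Pi.single k (1 : ℝ)) * Fvec f g z k

/-- Liouville's equation for a pair of measures `(η, ηT)` with initial point `x₀`. -/
def SatisfiesLiouville {n m : ℕ} (T : ℝ) (x₀ : Fin n → ℝ)
    (f : ℝ × (Fin n → ℝ) → Fin n → ℝ) (g : ℝ × (Fin n → ℝ) → Fin n → Fin m → ℝ)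
    (η : Measure (ℝ × (Fin n → ℝ) × (Fin m → ℝ))) (ηT : Measure (Fin n → ℝ)) : Prop :=
  ∀ v : ℝ × (Fin n → ℝ) → ℝ, ContDiff ℝ 1 v →
    v (0, x₀) + ∫ z, LFop f g v z ∂η = ∫ y, v (T, y) ∂ηT

/-- An admissible pair: a Borel measurable control `u` with values in `U` and an
absolutely continuous trajectory `x` with `x(0) = x₀`, `x(T) ∈ X_T`, `x(t) ∈ X` on `[0,T]`
and `ẋ = F(t,x,u)` a.e. (encoded in integral form). -/
def IsAdmissiblePair {n m : ℕ} (T : ℝ) (X XT : Set (Fin n → ℝ)) (x₀ : Fin n → ℝ)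
    (f : ℝ × (Fin n → ℝ) → Fin n → ℝ) (g : ℝ × (Fin n → ℝ) → Fin n → Fin m → ℝ)
    (x : ℝ → Fin n → ℝ) (u : ℝ → Fin m → ℝ) : Prop :=
  Measurable u ∧ (∀ t ∈ Set.Icc (0 : ℝ) T, u t ∈ Ubox m) ∧
  x 0 = x₀ ∧ x T ∈ XT ∧ (∀ t ∈ Set.Icc (0 : ℝ) T, x t ∈ X) ∧
  IntegrableOn (fun s => Fvec f g (s, x s, u s)) (Set.Icc (0 : ℝ) T) volume ∧
  ∀ t ∈ Set.Icc (0 : ℝ) T, x t = x₀ + ∫ s in Set.Icc (0 : ℝ) t, Fvec f g (s, x s, u s)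

/-- The cost `J(x,u) = ∫₀^T h(t,x(t),u(t)) dt + H(x(T))` of an admissible pair. -/
def Jcost {n m : ℕ} (T : ℝ) (h : ℝ × (Fin n → ℝ) × (Fin m → ℝ) → ℝ)
    (H : (Fin n → ℝ) → ℝ) (x : ℝ → Fin n → ℝ) (u : ℝ → Fin m → ℝ) : ℝ :=
  (∫ t in Set.Icc (0 : ℝ) T, h (t, x t, u t)) + H (x T)

/-- The set of costs of admissible pairs; its infimum is `J*`. -/
def JVals {n m : ℕ} (T : ℝ) (X XT : Set (Fin n → ℝ)) (x₀ : Fin n → ℝ)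
    (f : ℝ × (Fin n → ℝ) → Fin n → ℝ) (g : ℝ × (Fin n → ℝ) → Fin n → Fin m → ℝ)
    (h : ℝ × (Fin n → ℝ) × (Fin m → ℝ) → ℝ) (H : (Fin n → ℝ) → ℝ) : Set ℝ :=
  {c | ∃ (x : ℝ → Fin n → ℝ) (u : ℝ → Fin m → ℝ),
    IsAdmissiblePair T X XT x₀ f g x u ∧ c = Jcost T h H x u}

/-- Feasibility for problem `(Q)`. -/
def QFeasible {n m : ℕ} (T : ℝ) (X XT : Set (Fin n → ℝ)) (x₀ : Fin n → ℝ)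
    (f : ℝ × (Fin n → ℝ) → Fin n → ℝ) (g : ℝ × (Fin n → ℝ) → Fin n → Fin m → ℝ)
    (η : Measure (ℝ × (Fin n → ℝ) × (Fin m → ℝ))) (ηT : Measure (Fin n → ℝ)) : Prop :=
  IsFiniteMeasure η ∧ IsFiniteMeasure ηT ∧
  η ((Set.Icc (0 : ℝ) T ×ˢ X ×ˢ Ubox m)ᶜ) = 0 ∧ ηT (XTᶜ) = 0 ∧
  SatisfiesLiouville T x₀ f g η ηT

/-- The cost `⟨η,h⟩ + ⟨η_T,H⟩` of a pair of measures. -/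
def Qcost {n m : ℕ} (h : ℝ × (Fin n → ℝ) × (Fin m → ℝ) → ℝ) (H : (Fin n → ℝ) → ℝ)
    (η : Measure (ℝ × (Fin n → ℝ) × (Fin m → ℝ))) (ηT : Measure (Fin n → ℝ)) : ℝ :=
  ∫ z, h z ∂η + ∫ y, H y ∂ηT

/-- The set of costs of feasible points of `(Q)`; its infimum is `q*`. -/
def QVals {n m : ℕ} (T : ℝ) (X XT : Set (Fin n → ℝ)) (x₀ : Fin n → ℝ)
    (f : ℝ × (Fin n → ℝ) → Fin n → ℝ) (g : ℝ × (Fin n → ℝ) → Fin n → Fin m → ℝ)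
    (h : ℝ × (Fin n → ℝ) × (Fin m → ℝ) → ℝ) (H : (Fin n → ℝ) → ℝ) : Set ℝ :=
  {c | ∃ (η : Measure (ℝ × (Fin n → ℝ) × (Fin m → ℝ))) (ηT : Measure (Fin n → ℝ)),
    QFeasible T X XT x₀ f g η ηT ∧ c = Qcost h H η ηT}

section Aux
open Filter Topology

lemma LFop_eq {n m : ℕ} (f : ℝ × (Fin n → ℝ) → Fin n → ℝ)
    (g : ℝ × (Fin n → ℝ) → Fin n → Fin m → ℝ)
    (v : ℝ × (Fin n → ℝ) → ℝ) (z : ℝ × (Fin n → ℝ) × (Fin m → ℝ)) :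
    LFop f g v z = fderiv ℝ v (z.1, z.2.1) ((1 : ℝ), Fvec f g z) := by
  unfold LFop
  set D := fderiv ℝ v (z.1, z.2.1)
  have h1 : ((1 : ℝ), Fvec f g z) = ((1 : ℝ), (0 : Fin n → ℝ)) +
      ∑ k, Fvec f g z k • ((0 : ℝ), (Pi.single k (1 : ℝ) : Fin n → ℝ)) := by
    ext i
    · simp [Prod.fst_sum]
    · simp [Prod.snd_sum, Finset.sum_apply, Pi.single_apply]
  rw [h1, map_add, map_sum]
  congr 1
  refine Finset.sum_congr rfl fun k _ => ?_
  rw [map_smul, smul_eq_mul, mul_comm]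

lemma Fvec_continuousOn {n m : ℕ} {T : ℝ} {f : ℝ × (Fin n → ℝ) → Fin n → ℝ}
    {g : ℝ × (Fin n → ℝ) → Fin n → Fin m → ℝ}
    (hf : ContinuousOn f (Set.Icc (0 : ℝ) T ×ˢ Set.univ))
    (hg : ContinuousOn g (Set.Icc (0 : ℝ) T ×ˢ Set.univ)) :
    ContinuousOn (Fvec f g) (Set.Icc (0 : ℝ) T ×ˢ Set.univ) := by
  have hp : ContinuousOn (fun z : ℝ × (Fin n → ℝ) × (Fin m → ℝ) => (z.1, z.2.1))
      (Set.Icc (0 : ℝ) T ×ˢ Set.univ) := by fun_prop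
  have hm : MapsTo (fun z : ℝ × (Fin n → ℝ) × (Fin m → ℝ) => (z.1, z.2.1))
      (Set.Icc (0 : ℝ) T ×ˢ Set.univ) (Set.Icc (0 : ℝ) T ×ˢ Set.univ) := by
    rintro z ⟨h1, -⟩; exact ⟨h1, mem_univ _⟩
  have hf' := hf.comp hp hm
  have hg' := hg.comp hp hm
  refine continuousOn_pi.2 fun k => ?_
  unfold Fvec
  refine ContinuousOn.add ((continuousOn_pi.1 hf') k) ?_
  refine continuousOn_finsetSum _ fun j _ => ?_
  refine ContinuousOn.mul (continuousOn_pi.1 ((continuousOn_pi.1 hg') k) j) ?_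
  fun_prop

lemma isCompact_Ubox (m : ℕ) : IsCompact (Ubox m) := isCompact_Icc

/-- continuity of admissible trajectories -/
lemma adm_bound {n m : ℕ} {T : ℝ} {X XT : Set (Fin n → ℝ)} {x₀ : Fin n → ℝ}
    {f : ℝ × (Fin n → ℝ) → Fin n → ℝ} {g : ℝ × (Fin n → ℝ) → Fin n → Fin m → ℝ}
    {M : ℝ} (hM : ∀ z ∈ Set.Icc (0 : ℝ) T ×ˢ X ×ˢ Ubox m, ‖Fvec f g z‖ ≤ M)
    {x : ℝ → Fin n → ℝ} {u : ℝ → Fin m → ℝ}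
    (hadm : IsAdmissiblePair T X XT x₀ f g x u) :
    ∀ s ∈ Icc 0 T, ∀ t ∈ Icc 0 T, dist (x s) (x t) ≤ M * |s - t| := by
  obtain ⟨hu, huU, hx0, hxT, hxX, hint, hx⟩ := hadm
  have key : ∀ s ∈ Icc 0 T, ∀ t ∈ Icc 0 T, s ≤ t → dist (x s) (x t) ≤ M * |s - t| := by
    intro s hs t ht hst
    have e : x t - x s = ∫ r in s..t, Fvec f g (r, x r, u r) := by
      rw [hx s hs, hx t ht, integral_Icc_eq_integral_Ioc, integral_Icc_eq_integral_Ioc,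
        ← intervalIntegral.integral_of_le hs.1, ← intervalIntegral.integral_of_le ht.1]
      have := intervalIntegral.integral_interval_sub_left
        (f := fun r => Fvec f g (r, x r, u r)) (μ := volume) (a := 0) (b := t) (c := s) ?_ ?_
      · rw [← this]; abel
      · rw [intervalIntegrable_iff_integrableOn_Icc_of_le ht.1]
        exact hint.mono_set (Icc_subset_Icc_right ht.2)
      · rw [intervalIntegrable_iff_integrableOn_Icc_of_le hs.1]
        exact hint.mono_set (Icc_subset_Icc_right hs.2)
    rw [dist_comm, dist_eq_norm, e, abs_sub_comm]
    refine intervalIntegral.norm_integral_le_of_norm_le_const fun r hr => ?_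
    rw [uIoc_of_le hst] at hr
    have hr' : r ∈ Icc 0 T := ⟨hs.1.trans hr.1.le, hr.2.trans ht.2⟩
    exact hM _ ⟨hr', hxX r hr', huU r hr'⟩
  intro s hs t ht
  rcases le_total s t with h | h
  · exact key s hs t ht h
  · rw [dist_comm, abs_sub_comm]; exact key t ht s hs h

lemma occ_feasible {n m : ℕ} {T : ℝ} (hT : 0 < T)
    {X XT : Set (Fin n → ℝ)} (hX : IsCompact X) (hXT : IsCompact XT)
    {x₀ : Fin n → ℝ}
    {f : ℝ × (Fin n → ℝ) → Fin n → ℝ} {g : ℝ × (Fin n → ℝ) → Fin n → Fin m → ℝ}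
    (hf : ContinuousOn f (Set.Icc (0 : ℝ) T ×ˢ Set.univ))
    (hg : ContinuousOn g (Set.Icc (0 : ℝ) T ×ˢ Set.univ))
    {h : ℝ × (Fin n → ℝ) × (Fin m → ℝ) → ℝ} {H : (Fin n → ℝ) → ℝ}
    (hh : Continuous h)
    {x : ℝ → Fin n → ℝ} {u : ℝ → Fin m → ℝ}
    (hadm : IsAdmissiblePair T X XT x₀ f g x u) :
    Jcost T h H x u ∈ QVals T X XT x₀ f g h H := by
  obtain ⟨M, hM⟩ := (isCompact_Icc.prod (hX.prod (isCompact_Ubox m))).exists_bound_of_continuousOn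
    ((Fvec_continuousOn hf hg).mono (prod_mono le_rfl (subset_univ _)))
  have hbd := adm_bound hM hadm
  obtain ⟨hu, huU, hx0, hxT, hxX, hint, hx⟩ := hadm
  have hMnn : ∀ s ∈ Icc (0:ℝ) T, 0 ≤ M := fun s hs =>
    (norm_nonneg _).trans (hM (s, x s, u s) ⟨hs, hxX s hs, huU s hs⟩)
  have hM0 : 0 ≤ M := hMnn 0 ⟨le_rfl, hT.le⟩
  have hlip : LipschitzOnWith M.toNNReal x (Icc 0 T) := by
    refine LipschitzOnWith.of_dist_le_mul fun s hs t ht => ?_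
    rw [Real.coe_toNNReal M hM0, Real.dist_eq]; exact hbd s hs t ht
  have hxc : ContinuousOn x (Icc 0 T) := hlip.continuousOn
  have hxm : AEMeasurable x (volume.restrict (Icc 0 T)) := hxc.aemeasurable measurableSet_Icc
  have hpm : AEMeasurable (fun t => (t, x t, u t)) (volume.restrict (Icc 0 T)) :=
    aemeasurable_id.prodMk (hxm.prodMk hu.aemeasurable)
  have hmeasK : MeasurableSet (Set.Icc (0 : ℝ) T ×ˢ X ×ˢ Ubox m) :=
    (isCompact_Icc.prod (hX.prod (isCompact_Ubox m))).measurableSet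
  have hsupp : (volume.restrict (Icc 0 T)).map (fun t => (t, x t, u t))
      ((Set.Icc (0 : ℝ) T ×ˢ X ×ˢ Ubox m)ᶜ) = 0 := by
    have : ∀ᵐ z ∂((volume.restrict (Icc 0 T)).map (fun t => (t, x t, u t))),
        z ∈ (Set.Icc (0 : ℝ) T ×ˢ X ×ˢ Ubox m) := by
      refine (ae_map_iff (p := fun z => z ∈ (Set.Icc (0 : ℝ) T ×ˢ X ×ˢ Ubox m)) hpm
        hmeasK).2 ?_
      filter_upwards [ae_restrict_mem measurableSet_Icc] with t ht
      exact ⟨ht, hxX t ht, huU t ht⟩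
    exact this
  refine ⟨(volume.restrict (Icc 0 T)).map (fun t => (t, x t, u t)), Measure.dirac (x T),
    ⟨?_, inferInstance, hsupp, ?_, ?_⟩, ?_⟩
  · infer_instance
  · rw [Measure.dirac_apply' _ hXT.measurableSet.compl]; simp [hxT]
  · intro v hv
    have hrestr : ((volume.restrict (Icc 0 T)).map (fun t => (t, x t, u t))).restrict
        (Set.Icc (0 : ℝ) T ×ˢ X ×ˢ Ubox m)
        = (volume.restrict (Icc 0 T)).map (fun t => (t, x t, u t)) :=
      Measure.restrict_eq_self_of_ae_mem hsupp
    have hLc : ContinuousOn (LFop f g v) (Set.Icc (0 : ℝ) T ×ˢ X ×ˢ Ubox m) := by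
      have : LFop f g v = fun z => fderiv ℝ v (z.1, z.2.1) ((1 : ℝ), Fvec f g z) := by
        ext z; exact LFop_eq f g v z
      rw [this]
      have h1 : Continuous (fun z : ℝ × (Fin n → ℝ) × (Fin m → ℝ) =>
          fderiv ℝ v (z.1, z.2.1)) :=
        (hv.continuous_fderiv one_ne_zero).comp (by fun_prop)
      refine h1.continuousOn.clm_apply (continuousOn_const.prodMk
        ((Fvec_continuousOn hf hg).mono (prod_mono le_rfl (subset_univ _))))
    have hLm : AEStronglyMeasurable (LFop f g v)
        ((volume.restrict (Icc 0 T)).map (fun t => (t, x t, u t))) := by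
      rw [← hrestr]; exact hLc.aestronglyMeasurable hmeasK
    rw [integral_map hpm hLm, integral_dirac]
    set F : ℝ → (Fin n → ℝ) := fun r => Fvec f g (r, x r, u r) with hF
    -- the absolutely continuous function t ↦ v (t, y t)
    set y : ℝ → Fin n → ℝ := fun t => x₀ + ∫ r in (0:ℝ)..t, F r with hy
    have hxy : ∀ t ∈ Icc 0 T, x t = y t := fun t ht => by
      rw [hx t ht, integral_Icc_eq_integral_Ioc, ← intervalIntegral.integral_of_le ht.1]
    have hFint : IntervalIntegrable F volume 0 T := by
      rw [intervalIntegrable_iff_integrableOn_Icc_of_le hT.le]; exact hint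
    have hxbd : ∃ R, ∀ t ∈ Icc 0 T, x t ∈ Metric.closedBall (0 : Fin n → ℝ) R := by
      obtain ⟨R, hR⟩ := isCompact_Icc.exists_bound_of_continuousOn hxc
      exact ⟨R, fun t ht => by simpa using hR t ht⟩
    obtain ⟨R, hR⟩ := hxbd
    obtain ⟨Kv, hKv⟩ := ((isCompact_Icc (a := (0:ℝ)) (b := T)).prod
      (isCompact_closedBall (0 : Fin n → ℝ) R)).exists_bound_of_continuousOn
      (hv.continuous_fderiv one_ne_zero).continuousOn
    have hvlip : LipschitzOnWith Kv.toNNReal v (Icc 0 T ×ˢ Metric.closedBall 0 R) := by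
      refine Convex.lipschitzOnWith_of_nnnorm_fderiv_le (𝕜 := ℝ)
        (fun z _ => hv.differentiable one_ne_zero z) ?_
        ((convex_Icc _ _).prod (convex_closedBall _ _))
      intro z hz
      rw [← NNReal.coe_le_coe, coe_nnnorm]
      exact (hKv z hz).trans (Real.le_coe_toNNReal _)
    have hylip : LipschitzOnWith M.toNNReal y (Icc 0 T) := by
      intro s hs t ht
      rw [← hxy s hs, ← hxy t ht]; exact hlip hs ht
    have hplip : LipschitzOnWith (max 1 M.toNNReal) (fun t => (t, y t)) (Icc 0 T) :=
      (LipschitzWith.id.lipschitzOnWith).prodMk hylip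
    have hwlip : LipschitzOnWith (Kv.toNNReal * max 1 M.toNNReal) (fun t => v (t, y t))
        (Icc 0 T) := hvlip.comp hplip (fun t ht => ⟨ht, by rw [← hxy t ht]; exact hR t ht⟩)
    have hac : AbsolutelyContinuousOnInterval (fun t => v (t, y t)) 0 T := by
      refine LipschitzOnWith.absolutelyContinuousOnInterval (K := Kv.toNNReal * max 1 M.toNNReal) ?_
      rwa [uIcc_of_le hT.le]
    have hftc := hac.integral_deriv_eq_sub
    have hder := hFint.ae_hasDerivAt_integral
    have hval : ∫ t in (0:ℝ)..T, deriv (fun t => v (t, y t)) t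
        = ∫ t in Icc 0 T, LFop f g v (t, x t, u t) := by
      rw [intervalIntegral.integral_of_le hT.le, ← integral_Icc_eq_integral_Ioc]
      refine setIntegral_congr_ae measurableSet_Icc ?_
      filter_upwards [hder] with t ht htI
      have h1 : HasDerivAt (fun t => ∫ r in (0:ℝ)..t, F r) (F t) t :=
        ht (by rwa [uIcc_of_le hT.le]) 0 (by simp)
      have h2 : HasDerivAt y (F t) t := by
        simpa [hy] using h1.const_add x₀
      have h3 : HasDerivAt (fun t => (t, y t)) ((1:ℝ), F t) t := (hasDerivAt_id t).prodMk h2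
      have h4 := ((hv.differentiable one_ne_zero (t, y t)).hasFDerivAt).comp_hasDerivAt t h3
      rw [LFop_eq]
      have := h4.deriv
      simp only [Function.comp_def] at this
      rw [this]
      simp only [hxy t htI, hF]
    rw [← hval, hftc, hxy T ⟨hT.le, le_rfl⟩]
    simp [hy]
  · unfold Jcost Qcost
    rw [integral_map hpm hh.aestronglyMeasurable, integral_dirac]

section valuefun

set_option linter.unusedSectionVars false

variable {E W : Type*} [NormedAddCommGroup E] [NormedSpace ℝ E] [FiniteDimensional ℝ E]
  [MeasurableSpace E] [BorelSpace E]
  [NormedAddCommGroup W] [MeasurableSpace W] [BorelSpace W] [SecondCountableTopology W]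

/-- measurable controls with values in `S` -/
def Ctrl (S : Set (W × E)) : Type _ := {c : ℝ → W × E // Measurable c ∧ ∀ t, c t ∈ S}

/-- trajectory of the trivial dynamics -/
def traj (t : ℝ) (x : E) (c : ℝ → W × E) (s : ℝ) : E := x + ∫ r in t..s, (c r).2

/-- cost of a control -/
def ccost (T : ℝ) (Λ : ℝ × E × W × E → ℝ) (G : E → ℝ) (t : ℝ) (x : E) (c : ℝ → W × E) : ℝ :=
  (∫ s in t..T, Λ (s, traj t x c s, c s)) + G (traj t x c T)

/-- value function -/
def valF (T : ℝ) (Λ : ℝ × E × W × E → ℝ) (G : E → ℝ) (S : Set (W × E)) (p : ℝ × E) : ℝ :=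
  ⨅ c : Ctrl S, ccost T Λ G p.1 p.2 c.1

lemma ctrl_intervalIntegrable {S : Set (W × E)} {M : ℝ} (hS : ∀ a ∈ S, ‖a.2‖ ≤ M)
    (c : Ctrl S) (a b : ℝ) : IntervalIntegrable (fun r => (c.1 r).2) volume a b := by
  rw [intervalIntegrable_iff]
  refine Measure.integrableOn_of_bounded (M := M) (by simp) ?_ ?_
  · exact (c.2.1.snd).aestronglyMeasurable
  · exact ae_of_all _ fun r => hS _ (c.2.2 r)

lemma traj_continuous {S : Set (W × E)} {M : ℝ} (hS : ∀ a ∈ S, ‖a.2‖ ≤ M)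
    (c : Ctrl S) (t : ℝ) (x : E) : Continuous (traj t x c.1) := by
  unfold traj
  exact continuous_const.add
    (intervalIntegral.continuous_primitive (fun a b => ctrl_intervalIntegrable hS c a b) t)

lemma lag_intervalIntegrable {S : Set (W × E)} {Λ : ℝ × E × W × E → ℝ} {C : ℝ}
    (hΛ : Continuous Λ) (hΛb : ∀ z, |Λ z| ≤ C) (c : Ctrl S) {y : ℝ → E} (hy : Continuous y)
    (a b : ℝ) : IntervalIntegrable (fun s => Λ (s, y s, c.1 s)) volume a b := by
  rw [intervalIntegrable_iff]
  refine Measure.integrableOn_of_bounded (M := C) (by simp) ?_ ?_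
  · exact (hΛ.measurable.comp (measurable_id.prodMk
      (hy.measurable.prodMk c.2.1))).aestronglyMeasurable
  · exact ae_of_all _ fun r => hΛb _

lemma ccost_bdd {S : Set (W × E)} {Λ : ℝ × E × W × E → ℝ} {G : E → ℝ} {C : ℝ}
    (hΛb : ∀ z, |Λ z| ≤ C) (hGb : ∀ z, |G z| ≤ C) (T t : ℝ) (x : E) (c : ℝ → W × E) :
    |ccost T Λ G t x c| ≤ C * |T - t| + C := by
  unfold ccost
  refine (abs_add_le _ _).trans (add_le_add ?_ (hGb _))
  rw [← Real.norm_eq_abs]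
  exact intervalIntegral.norm_integral_le_of_norm_le_const fun r _ => hΛb _

lemma ccost_bddBelow {S : Set (W × E)} {Λ : ℝ × E × W × E → ℝ} {G : E → ℝ} {C : ℝ}
    (hΛb : ∀ z, |Λ z| ≤ C) (hGb : ∀ z, |G z| ≤ C) (T t : ℝ) (x : E) :
    BddBelow (range fun c : Ctrl S => ccost T Λ G t x c.1) := by
  refine ⟨-(C * |T - t| + C), ?_⟩
  rintro _ ⟨c, rfl⟩
  exact (abs_le.1 (ccost_bdd (S := S) hΛb hGb T t x c.1)).1

lemma traj_diff {S : Set (W × E)} {M : ℝ} (hS : ∀ a ∈ S, ‖a.2‖ ≤ M)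
    (c : Ctrl S) (t t' : ℝ) (x x' : E) (s : ℝ) :
    dist (traj t x c.1 s) (traj t' x' c.1 s) ≤ dist x x' + M * |t' - t| := by
  have e : traj t x c.1 s - traj t' x' c.1 s = (x - x') + ∫ r in t..t', (c.1 r).2 := by
    unfold traj
    rw [← intervalIntegral.integral_add_adjacent_intervals
      (ctrl_intervalIntegrable hS c t t') (ctrl_intervalIntegrable hS c t' s)]
    abel
  rw [dist_eq_norm, e, dist_eq_norm]
  refine (norm_add_le _ _).trans (add_le_add le_rfl ?_)
  exact intervalIntegral.norm_integral_le_of_norm_le_const fun r _ => hS _ (c.2.2 r)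

lemma ccost_modulus {S : Set (W × E)} {M : ℝ} (hM : 0 ≤ M) (hS : ∀ a ∈ S, ‖a.2‖ ≤ M)
    {Λ : ℝ × E × W × E → ℝ} {G : E → ℝ} {C : ℝ}
    (hΛ : UniformContinuous Λ) (hG : UniformContinuous G)
    (hΛb : ∀ z, |Λ z| ≤ C) (T : ℝ) {e A : ℝ} (he : 0 < e) (hA : 0 ≤ A) :
    ∃ δ > 0, ∀ p p' : ℝ × E, |T - p'.1| ≤ A → dist p p' < δ → ∀ c : Ctrl S,
      |ccost T Λ G p.1 p.2 c.1 - ccost T Λ G p'.1 p'.2 c.1| ≤ e := by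
  have hC : 0 ≤ C := (abs_nonneg _).trans (hΛb 0)
  set e1 := e / (A + 2) with he1
  have he1p : 0 < e1 := by positivity
  obtain ⟨d1, hd1, h1⟩ := Metric.uniformContinuous_iff.1 hΛ e1 he1p
  obtain ⟨d2, hd2, h2⟩ := Metric.uniformContinuous_iff.1 hG e1 he1p
  refine ⟨min (min d1 d2 / (1 + M)) (e1 / (C + 1)), by positivity, ?_⟩
  rintro ⟨t, x⟩ ⟨t', x'⟩ hpA hpp c
  simp only at hpA ⊢
  have hdt : dist t t' ≤ dist (t, x) (t', x') := le_max_left _ _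
  have hdx : dist x x' ≤ dist (t, x) (t', x') := le_max_right _ _
  set D := dist (t, x) (t', x')
  have hD1 : D * (1 + M) < min d1 d2 := by
    have := lt_of_lt_of_le hpp (min_le_left _ _)
    rwa [lt_div_iff₀ (by positivity)] at this
  have hD2 : D * (C + 1) < e1 := by
    have := lt_of_lt_of_le hpp (min_le_right _ _)
    rwa [lt_div_iff₀ (by positivity)] at this
  have hD0 : 0 ≤ D := dist_nonneg
  have htt : |t' - t| ≤ D := by rw [abs_sub_comm]; exact hdt
  have htr : ∀ s, dist (traj t x c.1 s) (traj t' x' c.1 s) < min d1 d2 := fun s => by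
    refine (traj_diff hS c t t' x x' s).trans_lt (lt_of_le_of_lt ?_ hD1)
    nlinarith [mul_le_mul_of_nonneg_left htt hM]
  have i1 := lag_intervalIntegrable hΛ.continuous hΛb c (traj_continuous hS c t x)
  have i2 := lag_intervalIntegrable hΛ.continuous hΛb c (traj_continuous hS c t' x')
  have key : ccost T Λ G t x c.1 - ccost T Λ G t' x' c.1
      = (∫ s in t..t', Λ (s, traj t x c.1 s, c.1 s))
        + (∫ s in t'..T, (Λ (s, traj t x c.1 s, c.1 s) - Λ (s, traj t' x' c.1 s, c.1 s)))
        + (G (traj t x c.1 T) - G (traj t' x' c.1 T)) := by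
    unfold ccost
    rw [intervalIntegral.integral_sub (i1 _ _) (i2 _ _),
      ← intervalIntegral.integral_add_adjacent_intervals (i1 t t') (i1 t' T)]
    ring
  rw [key]
  have b1 : |∫ s in t..t', Λ (s, traj t x c.1 s, c.1 s)| ≤ C * |t' - t| := by
    rw [← Real.norm_eq_abs]
    exact intervalIntegral.norm_integral_le_of_norm_le_const fun r _ => hΛb _
  have b2 : |∫ s in t'..T, (Λ (s, traj t x c.1 s, c.1 s) - Λ (s, traj t' x' c.1 s, c.1 s))|
      ≤ e1 * |T - t'| := by
    rw [← Real.norm_eq_abs]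
    refine intervalIntegral.norm_integral_le_of_norm_le_const fun s _ => ?_
    rw [← dist_eq_norm]
    refine (h1 ?_).le
    simp only [Prod.dist_eq, dist_self]
    have := (htr s).trans_le (min_le_left _ _)
    simp [this, hd1]
  have b3 : |G (traj t x c.1 T) - G (traj t' x' c.1 T)| ≤ e1 := by
    rw [← Real.dist_eq]
    exact (h2 ((htr T).trans_le (min_le_right _ _))).le
  refine (abs_add_le _ _).trans ((add_le_add (abs_add_le _ _) le_rfl).trans ?_)
  have b1' : C * |t' - t| ≤ e1 := by nlinarith
  have b2' : e1 * |T - t'| ≤ e1 * A := by gcongr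
  have : e1 * (A + 2) = e := by rw [he1]; field_simp
  nlinarith

lemma valF_modulus {S : Set (W × E)} {M : ℝ} (hM : 0 ≤ M) (hS : ∀ a ∈ S, ‖a.2‖ ≤ M)
    (hSne : S.Nonempty)
    {Λ : ℝ × E × W × E → ℝ} {G : E → ℝ} {C : ℝ}
    (hΛ : UniformContinuous Λ) (hG : UniformContinuous G)
    (hΛb : ∀ z, |Λ z| ≤ C) (hGb : ∀ z, |G z| ≤ C) (T : ℝ) {e A : ℝ} (he : 0 < e) (hA : 0 ≤ A) :
    ∃ δ > 0, ∀ p p' : ℝ × E, |T - p'.1| ≤ A → dist p p' < δ →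
      |valF T Λ G S p - valF T Λ G S p'| ≤ e := by
  obtain ⟨δ, hδ, h⟩ := ccost_modulus hM hS hΛ hG hΛb T he hA
  refine ⟨δ, hδ, fun p p' hA' hpp => ?_⟩
  have h' := h p p' hA' hpp
  obtain ⟨a, ha⟩ := hSne
  have : Nonempty (Ctrl S) := ⟨⟨fun _ => a, measurable_const, fun _ => ha⟩⟩
  have k1 : valF T Λ G S p - e ≤ valF T Λ G S p' := by
    refine le_ciInf fun c => ?_
    have h1 : valF T Λ G S p ≤ _ := ciInf_le (ccost_bddBelow hΛb hGb T p.1 p.2) c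
    have := (abs_le.1 (h' c)).2
    linarith
  have k2 : valF T Λ G S p' - e ≤ valF T Λ G S p := by
    refine le_ciInf fun c => ?_
    have h1 : valF T Λ G S p' ≤ _ := ciInf_le (ccost_bddBelow hΛb hGb T p'.1 p'.2) c
    have := (abs_le.1 (h' c)).1
    linarith
  rw [abs_le]; constructor <;> linarith

lemma valF_continuous {S : Set (W × E)} {M : ℝ} (hM : 0 ≤ M) (hS : ∀ a ∈ S, ‖a.2‖ ≤ M)
    (hSne : S.Nonempty)
    {Λ : ℝ × E × W × E → ℝ} {G : E → ℝ} {C : ℝ}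
    (hΛ : UniformContinuous Λ) (hG : UniformContinuous G)
    (hΛb : ∀ z, |Λ z| ≤ C) (hGb : ∀ z, |G z| ≤ C) (T : ℝ) : Continuous (valF T Λ G S) := by
  rw [Metric.continuous_iff]
  intro b e he
  obtain ⟨δ, hδ, h⟩ := valF_modulus hM hS hSne hΛ hG hΛb hGb T (half_pos he)
    (abs_nonneg (T - b.1))
  refine ⟨δ, hδ, fun a hab => ?_⟩
  rw [Real.dist_eq]
  exact (h a b le_rfl hab).trans_lt (half_lt_self he)

lemma valF_dpp {S : Set (W × E)} {M : ℝ} (hS : ∀ a ∈ S, ‖a.2‖ ≤ M)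
    {Λ : ℝ × E × W × E → ℝ} {G : E → ℝ} {C : ℝ}
    (hΛ : Continuous Λ)
    (hΛb : ∀ z, |Λ z| ≤ C) (hGb : ∀ z, |G z| ≤ C) {T t t' : ℝ} (h1 : t ≤ t') (h2 : t' ≤ T)
    (x : E) {a : W × E} (ha : a ∈ S) {B : ℝ}
    (hB : ∀ s ∈ Icc t t', Λ (s, x + (s - t) • a.2, a) ≤ B) :
    valF T Λ G S (t, x) ≤ (t' - t) * B + valF T Λ G S (t', x + (t' - t) • a.2) := by
  have : Nonempty (Ctrl S) := ⟨⟨fun _ => a, measurable_const, fun _ => ha⟩⟩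
  rw [← sub_le_iff_le_add']
  refine le_ciInf fun c => ?_
  rw [sub_le_iff_le_add']
  let c' : Ctrl S := ⟨fun s => if s ≤ t' then a else c.1 s,
    Measurable.ite measurableSet_Iic measurable_const c.2.1, fun s => by
      by_cases hs : s ≤ t'
      · simp [hs, ha]
      · simp [hs, c.2.2 s]⟩
  have hle : valF T Λ G S (t, x) ≤ ccost T Λ G t x c'.1 :=
    ciInf_le (ccost_bddBelow hΛb hGb T t x) c'
  refine hle.trans ?_
  have tr1 : ∀ s ∈ Icc t t', traj t x c'.1 s = x + (s - t) • a.2 := fun s hs => by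
    unfold traj
    rw [intervalIntegral.integral_congr (g := fun _ => a.2)]
    · simp
    · intro r hr
      rw [uIcc_of_le hs.1] at hr
      simp [c', hr.2.trans hs.2]
  have tr2 : ∀ s ∈ Icc t' T, traj t x c'.1 s = traj t' (x + (t' - t) • a.2) c.1 s :=
    fun s hs => by
      have : traj t x c'.1 s = traj t x c'.1 t' + ∫ r in t'..s, (c'.1 r).2 := by
        unfold traj
        rw [← intervalIntegral.integral_add_adjacent_intervals
          (ctrl_intervalIntegrable hS c' t t') (ctrl_intervalIntegrable hS c' t' s), add_assoc]
      rw [this, tr1 t' ⟨h1, le_rfl⟩]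
      unfold traj
      congr 1
      refine intervalIntegral.integral_congr_ae (ae_of_all _ fun r hr => ?_)
      rw [uIoc_of_le hs.1] at hr
      simp [c', not_le.2 hr.1]
  have i1 := lag_intervalIntegrable hΛ hΛb c' (traj_continuous hS c' t x)
  unfold ccost
  rw [← intervalIntegral.integral_add_adjacent_intervals (i1 t t') (i1 t' T), tr2 T ⟨h2, le_rfl⟩,
    add_assoc]
  refine add_le_add ?_ (add_le_add (le_of_eq ?_) le_rfl)
  · have : ∫ s in t..t', Λ (s, traj t x c'.1 s, c'.1 s) ≤ ∫ s in t..t', B := by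
      refine intervalIntegral.integral_mono_on h1 (i1 _ _) (by simp) fun s hs => ?_
      rw [tr1 s hs]
      have : c'.1 s = a := by simp [c', hs.2]
      rw [this]; exact hB s hs
    simpa using this
  · refine intervalIntegral.integral_congr_ae (ae_of_all _ fun r hr => ?_)
    rw [uIoc_of_le h2] at hr
    simp only []
    rw [tr2 r ⟨hr.1.le, hr.2⟩]
    have : c'.1 r = c.1 r := by simp [c', not_le.2 hr.1]
    rw [this]

end valuefun

section valuefun2
set_option linter.unusedSectionVars false

variable {E W : Type*} [NormedAddCommGroup E] [NormedSpace ℝ E] [FiniteDimensional ℝ E]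
  [MeasurableSpace E] [BorelSpace E]
  [NormedAddCommGroup W] [MeasurableSpace W] [BorelSpace W] [SecondCountableTopology W]

/-- existence of a smooth approximate subsolution -/
lemma exists_subsolution {S : Set (W × E)} {M : ℝ} (hM : 0 ≤ M) (hS : ∀ a ∈ S, ‖a.2‖ ≤ M)
    (hSne : S.Nonempty)
    {Λ : ℝ × E × W × E → ℝ} {G : E → ℝ} {C : ℝ}
    (hΛ : UniformContinuous Λ) (hG : UniformContinuous G)
    (hΛb : ∀ z, |Λ z| ≤ C) (hGb : ∀ z, |G z| ≤ C) {T : ℝ} (hT : 0 < T) {e : ℝ} (he : 0 < e) :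
    ∃ v : ℝ × E → ℝ, ContDiff ℝ 1 v ∧
      (∀ t ∈ Icc 0 T, ∀ x, |v (t, x) - valF T Λ G S (t, x)| ≤ e) ∧
      ∀ t ∈ Icc 0 T, ∀ x, ∀ a ∈ S, -(Λ (t, x, a) + e) ≤ fderiv ℝ v (t, x) ((1 : ℝ), a.2) := by
  obtain ⟨d1, hd1, hmod⟩ := valF_modulus hM hS hSne hΛ hG hΛb hGb T he hT.le
  obtain ⟨d2, hd2, hmodΛ⟩ := Metric.uniformContinuous_iff.1 hΛ e he
  set V := valF T Λ G S with hV
  have hVc : Continuous V := valF_continuous hM hS hSne hΛ hG hΛb hGb T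
  set δ := min d1 d2 / 8 with hδ
  have hδp : 0 < δ := by positivity
  have hδ1 : 8 * δ ≤ d1 := by rw [hδ]; linarith [min_le_left d1 d2]
  have hδ2 : 8 * δ ≤ d2 := by rw [hδ]; linarith [min_le_right d1 d2]
  let φ : ContDiffBump (0 : ℝ × E) := ⟨δ / 2, δ, by positivity, by linarith⟩
  let μ : Measure (ℝ × E) := Measure.addHaar
  let V' : ℝ × E → ℝ := fun p => V (p.1 - 2 * δ, p.2)
  have hV'c : Continuous V' := hVc.comp (by fun_prop)
  let v : ℝ × E → ℝ := fun p => ∫ y, φ.normed μ y * V' (p - y) ∂μ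
  have hvconv : v = (MeasureTheory.convolution (φ.normed μ) V' (ContinuousLinearMap.lsmul ℝ ℝ) μ) := by
    ext p; simp [v, MeasureTheory.convolution]
  have hvC : ContDiff ℝ 1 v := by
    rw [hvconv]
    exact φ.hasCompactSupport_normed.contDiff_convolution_left _ φ.contDiff_normed
      hV'c.locallyIntegrable
  have hint : ∀ p, Integrable (fun y => φ.normed μ y * V' (p - y)) μ := fun p => by
    refine Continuous.integrable_of_hasCompactSupport ?_ ?_
    · exact φ.continuous_normed.mul (hV'c.comp (by fun_prop))
    · exact φ.hasCompactSupport_normed.mul_right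
  have hsupp : ∀ y, φ.normed μ y ≠ 0 → ‖y‖ < δ := fun y hy => by
    have : y ∈ Function.support (φ.normed μ) := hy
    rw [φ.support_normed_eq] at this
    simpa using this
  refine ⟨v, hvC, ?_, ?_⟩
  · intro t ht x
    have hc : V (t, x) = ∫ y, φ.normed μ y * V (t, x) ∂μ := by
      rw [integral_mul_const, φ.integral_normed, one_mul]
    have hi : Integrable (fun y => φ.normed μ y * V (t, x)) μ :=
      (φ.integrable_normed).mul_const _
    have hfin : |v (t, x) - V (t, x)| ≤ ∫ y, φ.normed μ y * e ∂μ := by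
      rw [hc]
      simp only [v]
      rw [← integral_sub (hint _) hi, ← Real.norm_eq_abs]
      refine norm_integral_le_of_norm_le ((φ.integrable_normed).mul_const _)
        (ae_of_all _ fun y => ?_)
      rw [← mul_sub, norm_mul, Real.norm_of_nonneg (φ.nonneg_normed y)]
      by_cases hy : φ.normed μ y = 0
      · simp [hy]
      · refine mul_le_mul_of_nonneg_left ?_ (φ.nonneg_normed y)
        have hyn := hsupp y hy
        have hy1 : |y.1| < δ := lt_of_le_of_lt (norm_fst_le y) hyn
        have hy2 : ‖y.2‖ < δ := lt_of_le_of_lt (norm_snd_le y) hyn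
        refine hmod _ _ ?_ ?_
        · rw [abs_le]; constructor <;> linarith [ht.1, ht.2]
        · refine lt_of_lt_of_le (b := 4 * δ) ?_ (by linarith)
          rw [Prod.dist_eq, max_lt_iff]
          simp only [Prod.fst_sub, Prod.snd_sub]
          constructor
          · rw [Real.dist_eq, abs_lt]
            rw [abs_lt] at hy1
            constructor <;> linarith
          · rw [dist_eq_norm]
            have : x - y.2 - x = - y.2 := by abel
            rw [this, norm_neg]; linarith
    rwa [integral_mul_const, φ.integral_normed, one_mul] at hfin
  · intro t ht x a ha
    set B := Λ (t, x, a) + e with hB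
    -- difference inequality
    have hdiff : ∀ s, 0 < s → s * (1 + M) < δ →
        v (t, x) ≤ s * B + v ((t, x) + s • ((1 : ℝ), a.2)) := by
      intro s hs hsδ
      have hsδ' : s < δ := by nlinarith
      have hsM : s * M < δ := by nlinarith
      have hc : s * B = ∫ y, φ.normed μ y * (s * B) ∂μ := by
        rw [integral_mul_const, φ.integral_normed, one_mul]
      have hi : Integrable (fun y => φ.normed μ y * (s * B)) μ :=
        (φ.integrable_normed).mul_const _
      rw [hc]
      simp only [v]
      rw [← integral_add hi (hint _)]
      refine integral_mono (hint _) (hi.add (hint _)) fun y => ?_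
      simp only []
      rw [← mul_add]
      by_cases hy : φ.normed μ y = 0
      · simp [hy]
      refine mul_le_mul_of_nonneg_left ?_ (φ.nonneg_normed y)
      have hyn := hsupp y hy
      have hy1 : |y.1| < δ := lt_of_le_of_lt (norm_fst_le y) hyn
      have hy2 : ‖y.2‖ < δ := lt_of_le_of_lt (norm_snd_le y) hyn
      rw [abs_lt] at hy1
      have := valF_dpp (T := T) (t := t - y.1 - 2 * δ) (t' := t - y.1 - 2 * δ + s) (B := B)
        hS hΛ.continuous hΛb hGb (by linarith) (by linarith [ht.2]) (x - y.2) ha ?_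
      · simp only [V', Prod.fst_sub, Prod.snd_sub, Prod.fst_add, Prod.snd_add, Prod.smul_mk,
          smul_eq_mul, mul_one]
        rw [add_sub_cancel_left] at this
        have e1 : t + s - y.1 - 2 * δ = t - y.1 - 2 * δ + s := by ring
        have e2 : x + s • a.2 - y.2 = x - y.2 + s • a.2 := by abel
        rw [e1, e2]
        exact this
      · intro r hr
        have hlt : dist (r, x - y.2 + (r - (t - y.1 - 2 * δ)) • a.2, a) (t, x, a) < d2 := by
          refine lt_of_lt_of_le (b := 4 * δ) ?_ (by linarith)
          simp only [Prod.dist_eq, dist_self]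
          have k1 : dist r t < 4 * δ := by
            rw [Real.dist_eq, abs_lt]
            constructor <;> linarith [hr.1, hr.2]
          have k2 : dist (x - y.2 + (r - (t - y.1 - 2 * δ)) • a.2) x < 4 * δ := by
            rw [dist_eq_norm]
            have : x - y.2 + (r - (t - y.1 - 2 * δ)) • a.2 - x
              = -y.2 + (r - (t - y.1 - 2 * δ)) • a.2 := by abel
            rw [this]
            refine (norm_add_le _ _).trans_lt ?_
            rw [norm_neg, norm_smul, Real.norm_of_nonneg (by linarith [hr.1])]
            have : (r - (t - y.1 - 2 * δ)) * ‖a.2‖ ≤ s * M :=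
              mul_le_mul (by linarith [hr.2]) (hS a ha) (norm_nonneg _) hs.le
            linarith
          refine max_lt k1 (max_lt k2 ?_)
          simp; linarith
        have := hmodΛ hlt
        rw [Real.dist_eq, abs_lt] at this
        linarith [this.2]
    have hder : HasDerivAt (fun s : ℝ => v ((t, x) + s • ((1 : ℝ), a.2)))
        (fderiv ℝ v (t, x) ((1 : ℝ), a.2)) 0 := by
      have h1 : HasDerivAt (fun s : ℝ => (t, x) + s • ((1 : ℝ), a.2)) ((1 : ℝ), a.2) 0 := by
        simpa using ((hasDerivAt_id (0 : ℝ)).smul_const ((1 : ℝ), a.2)).const_add (t, x)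
      have h2 : HasFDerivAt v (fderiv ℝ v (t, x)) ((t, x) + (0 : ℝ) • ((1 : ℝ), a.2)) := by
        rw [zero_smul, add_zero]
        exact (hvC.differentiable one_ne_zero _).hasFDerivAt
      exact h2.comp_hasDerivAt (0 : ℝ) h1
    have hlim := hder.tendsto_slope_zero_right
    refine ge_of_tendsto hlim ?_
    have hev : ∀ᶠ s in 𝓝[>] (0 : ℝ), s < δ / (1 + M) :=
      mem_nhdsWithin_of_mem_nhds (Iio_mem_nhds (by positivity))
    filter_upwards [hev, self_mem_nhdsWithin] with s hs1 hs0
    have hs0' : 0 < s := hs0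
    rw [lt_div_iff₀ (by positivity)] at hs1
    have := hdiff s hs0' hs1
    simp only [zero_add, zero_smul, add_zero, smul_eq_mul]
    rw [← sub_nonneg] at this ⊢
    have e1 : s⁻¹ * (v ((t, x) + s • ((1 : ℝ), a.2)) - v (t, x)) - -B =
      s⁻¹ * (s * B + v ((t, x) + s • ((1 : ℝ), a.2)) - v (t, x)) := by
      field_simp
      ring
    rw [e1]
    positivity

lemma valF_le_integral {S : Set (W × E)} {M : ℝ} (hM : 0 ≤ M) (hS : ∀ a ∈ S, ‖a.2‖ ≤ M)
    (hSne : S.Nonempty)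
    {Λ : ℝ × E × W × E → ℝ} {G : E → ℝ} {C : ℝ}
    (hΛ : UniformContinuous Λ) (hG : UniformContinuous G)
    (hΛb : ∀ z, |Λ z| ≤ C) (hGb : ∀ z, |G z| ≤ C) {T : ℝ} (hT : 0 < T) (x₀ : E)
    (η : Measure (ℝ × E × W)) (ηT : Measure E) [IsFiniteMeasure η] [IsFiniteMeasure ηT]
    (F : ℝ × E × W → E)
    (hη : ∀ᵐ z ∂η, z.1 ∈ Icc 0 T ∧ (z.2.2, F z) ∈ S)
    (hF : AEStronglyMeasurable F η)
    (hL : ∀ v : ℝ × E → ℝ, ContDiff ℝ 1 v →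
      Integrable (fun z => fderiv ℝ v (z.1, z.2.1) ((1 : ℝ), F z)) η ∧ 
      Integrable (fun y => v (T, y)) ηT ∧
      v (0, x₀) + ∫ z, fderiv ℝ v (z.1, z.2.1) ((1 : ℝ), F z) ∂η = ∫ y, v (T, y) ∂ηT) :
    valF T Λ G S (0, x₀) ≤ ∫ z, Λ (z.1, z.2.1, z.2.2, F z) ∂η + ∫ y, G y ∂ηT := by
  have hVT : ∀ y, valF T Λ G S (T, y) = G y := fun y => by
    obtain ⟨a, ha⟩ := hSne
    have : Nonempty (Ctrl S) := ⟨⟨fun _ => a, measurable_const, fun _ => ha⟩⟩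
    simp [valF, ccost, traj]
  have hiΛ : Integrable (fun z => Λ (z.1, z.2.1, z.2.2, F z)) η := by
    refine Integrable.of_bound (C := C) ?_ (ae_of_all _ fun z => hΛb _)
    refine hΛ.continuous.comp_aestronglyMeasurable ?_
    exact measurable_fst.aestronglyMeasurable.prodMk
      (measurable_snd.fst.aestronglyMeasurable.prodMk
        (measurable_snd.snd.aestronglyMeasurable.prodMk hF))
  have hiG : Integrable G ηT :=
    Integrable.of_bound (C := C) hG.continuous.aestronglyMeasurable (ae_of_all _ fun z => hGb _)
  have main : ∀ e > 0, valF T Λ G S (0, x₀) ≤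
      (∫ z, Λ (z.1, z.2.1, z.2.2, F z) ∂η + ∫ y, G y ∂ηT)
        + e * (η.real univ + ηT.real univ + 1) := by
    intro e he
    obtain ⟨v, hv, hv1, hv2⟩ := exists_subsolution hM hS hSne hΛ hG hΛb hGb hT he
    obtain ⟨hi1, hi2, heq⟩ := hL v hv
    have b0 := (abs_le.1 (hv1 0 ⟨le_rfl, hT.le⟩ x₀)).1
    have b1 : ∫ z, -(Λ (z.1, z.2.1, z.2.2, F z) + e) ∂η ≤
        ∫ z, fderiv ℝ v (z.1, z.2.1) ((1 : ℝ), F z) ∂η := by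
      refine integral_mono_ae ((hiΛ.add (integrable_const e)).neg) hi1 ?_
      filter_upwards [hη] with z hz
      exact hv2 z.1 hz.1 z.2.1 _ hz.2
    have b2 : ∫ y, v (T, y) ∂ηT ≤ ∫ y, (G y + e) ∂ηT := by
      refine integral_mono hi2 (hiG.add (integrable_const e)) fun y => ?_
      have := (abs_le.1 (hv1 T ⟨hT.le, le_rfl⟩ y)).2
      rw [hVT] at this
      simp only []
      linarith
    rw [integral_neg, integral_add hiΛ (integrable_const e), integral_const, smul_eq_mul] at b1
    rw [integral_add hiG (integrable_const e), integral_const, smul_eq_mul] at b2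
    linarith
  refine le_of_forall_pos_le_add fun e he => ?_
  have hpos : 0 < η.real univ + ηT.real univ + 1 := by positivity
  have := main (e / (η.real univ + ηT.real univ + 1)) (by positivity)
  rwa [div_mul_cancel₀ _ hpos.ne'] at this

end valuefun2

/-- clamp of a real to `[0,T]` -/
def tclamp (T t : ℝ) : ℝ := max 0 (min T t)

/-- componentwise clamp to `[-R,R]` -/
def vclamp {k : ℕ} (R : ℝ) (x : Fin k → ℝ) : Fin k → ℝ := fun i => max (-R) (min R (x i))

lemma tclamp_mem {T : ℝ} (hT : 0 ≤ T) (t : ℝ) : tclamp T t ∈ Icc 0 T :=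
  ⟨le_max_left _ _, max_le hT (min_le_left _ _)⟩

lemma tclamp_eq {T t : ℝ} (ht : t ∈ Icc 0 T) : tclamp T t = t := by
  unfold tclamp; rw [min_eq_right ht.2, max_eq_right ht.1]

lemma tclamp_uc (T : ℝ) : UniformContinuous (tclamp T) := by
  have : LipschitzWith 1 (tclamp T) := (LipschitzWith.id.const_min T).const_max 0
  exact this.uniformContinuous

lemma vclamp_uc {k : ℕ} (R : ℝ) : UniformContinuous (vclamp (k := k) R) := by
  refine uniformContinuous_pi.2 fun i => ?_
  have : LipschitzWith 1 (fun s : ℝ => max (-R) (min R s)) :=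
    (LipschitzWith.id.const_min R).const_max (-R)
  exact this.uniformContinuous.comp (Pi.uniformContinuous_proj _ i)

lemma vclamp_norm {k : ℕ} {R : ℝ} (hR : 0 ≤ R) (x : Fin k → ℝ) : ‖vclamp R x‖ ≤ R := by
  rw [pi_norm_le_iff_of_nonneg hR]
  intro i
  rw [Real.norm_eq_abs, abs_le]
  exact ⟨le_max_left _ _, max_le (by linarith) (min_le_left _ _)⟩

lemma vclamp_eq {k : ℕ} {R : ℝ} {x : Fin k → ℝ} (hx : ‖x‖ ≤ R) : vclamp R x = x := by
  ext i
  have := (norm_le_pi_norm x i).trans hx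
  rw [Real.norm_eq_abs, abs_le] at this
  unfold vclamp
  rw [min_eq_right this.2, max_eq_right this.1]

lemma mem_Ubox_iff {m : ℕ} (u : Fin m → ℝ) : u ∈ Ubox m ↔ ‖u‖ ≤ 1 := by
  rw [pi_norm_le_iff_of_nonneg zero_le_one]
  simp only [Real.norm_eq_abs, abs_le, Ubox, mem_Icc, Pi.le_def, forall_and]

lemma Ftilde_continuous {n m : ℕ} {T : ℝ} (hT : 0 ≤ T) {f : ℝ × (Fin n → ℝ) → Fin n → ℝ}
    {g : ℝ × (Fin n → ℝ) → Fin n → Fin m → ℝ}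
    (hf : ContinuousOn f (Set.Icc (0 : ℝ) T ×ˢ Set.univ))
    (hg : ContinuousOn g (Set.Icc (0 : ℝ) T ×ˢ Set.univ)) :
    Continuous (fun z : ℝ × (Fin n → ℝ) × (Fin m → ℝ) => Fvec f g (tclamp T z.1, z.2)) := by
  refine (Fvec_continuousOn hf hg).comp_continuous ?_ fun z => ⟨tclamp_mem hT _, mem_univ _⟩
  exact ((tclamp_uc T).continuous.comp continuous_fst).prodMk continuous_snd

lemma uc_bdd_of_clamp {Y : Type*} [PseudoMetricSpace Y] {L : Y → ℝ} (hL : Continuous L)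
    {Q : Set Y} (hQ : IsCompact Q) {P : Y → Y} (hP : UniformContinuous P) (hPQ : ∀ y, P y ∈ Q) :
    UniformContinuous (fun y => L (P y)) ∧ ∃ C, ∀ y, |L (P y)| ≤ C := by
  constructor
  · have h1 := hQ.uniformContinuousOn_of_continuous hL.continuousOn
    rw [Metric.uniformContinuousOn_iff] at h1
    rw [Metric.uniformContinuous_iff] at hP ⊢
    intro e he
    obtain ⟨d, hd, h⟩ := h1 e he
    obtain ⟨d', hd', h'⟩ := hP d hd
    exact ⟨d', hd', fun a b hab => h _ (hPQ a) _ (hPQ b) (h' hab)⟩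
  · obtain ⟨C, hC⟩ := hQ.exists_bound_of_continuousOn hL.continuousOn
    exact ⟨C, fun y => hC _ (hPQ y)⟩

lemma approx_exists {n m : ℕ} {T : ℝ} (hT : 0 < T)
    {X XT : Set (Fin n → ℝ)} (hX : IsCompact X) (hXT : IsCompact XT) (hXTsub : XT ⊆ X)
    {x₀ : Fin n → ℝ}
    {f : ℝ × (Fin n → ℝ) → Fin n → ℝ} {g : ℝ × (Fin n → ℝ) → Fin n → Fin m → ℝ}
    (hf : ContinuousOn f (Set.Icc (0 : ℝ) T ×ˢ Set.univ))
    (hg : ContinuousOn g (Set.Icc (0 : ℝ) T ×ˢ Set.univ))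
    {h : ℝ × (Fin n → ℝ) × (Fin m → ℝ) → ℝ} {H : (Fin n → ℝ) → ℝ}
    (hh : Continuous h) (hH : Continuous H)
    {M : ℝ} (hM0 : 0 ≤ M)
    (hM : ∀ z ∈ Set.Icc (0 : ℝ) T ×ˢ X ×ˢ Ubox m, ‖Fvec f g z‖ ≤ M)
    {η : Measure (ℝ × (Fin n → ℝ) × (Fin m → ℝ))} {ηT : Measure (Fin n → ℝ)}
    (hηfeas : QFeasible T X XT x₀ f g η ηT) {K : ℝ} (hK : 0 ≤ K) {e : ℝ} (he : 0 < e) :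
    ∃ (x : ℝ → Fin n → ℝ) (u : ℝ → Fin m → ℝ) (a : ℝ), 
      Measurable u ∧ (∀ t, u t ∈ Ubox m) ∧ x 0 = x₀ ∧
      (∀ s t, dist (x s) (x t) ≤ M * |s - t|) ∧
      (∀ t ∈ Icc 0 T, ‖x t - x₀ - ∫ s in Icc 0 t, Fvec f g (s, x s, u s)‖ ≤ a) ∧
      (∫ t in Icc 0 T, Metric.infDist (x t) X) ≤ a ∧
      Metric.infDist (x T) XT ≤ a ∧
      Jcost T h H x u + K * a ≤ Qcost h H η ηT + e := by
  obtain ⟨hfin, hfinT, hsupp, hsuppT, hLiou⟩ := hηfeas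
  have hKc : IsCompact (Set.Icc (0 : ℝ) T ×ˢ X ×ˢ Ubox m) :=
    isCompact_Icc.prod (hX.prod (isCompact_Ubox m))
  have hae : ∀ᵐ z ∂η, z ∈ (Set.Icc (0 : ℝ) T ×ˢ X ×ˢ Ubox m) := hsupp
  have haeT : ∀ᵐ y ∂ηT, y ∈ XT := hsuppT
  have hrestr := Measure.restrict_eq_self_of_ae_mem hae
  have hrestrT := Measure.restrict_eq_self_of_ae_mem haeT
  have hFc : ContinuousOn (Fvec f g) (Set.Icc (0 : ℝ) T ×ˢ X ×ˢ Ubox m) :=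
    (Fvec_continuousOn hf hg).mono (prod_mono le_rfl (subset_univ _))
  obtain ⟨R0, hR0⟩ := hX.exists_bound_of_continuousOn (f := id) continuousOn_id
  set R := max R0 (‖x₀‖ + M * T) with hRdef
  have hR : 0 ≤ R := le_trans (by positivity) (le_max_right _ _)
  set Ft : ℝ × (Fin n → ℝ) × (Fin m → ℝ) → Fin n → ℝ := fun z => Fvec f g (tclamp T z.1, z.2)
    with hFt
  have hFtc : Continuous Ft := Ftilde_continuous hT.le hf hg
  let Λ0 : ℝ × (Fin n → ℝ) × (Fin m → ℝ) × (Fin n → ℝ) → ℝ := fun z =>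
    h (z.1, z.2.1, z.2.2.1) + K * ‖z.2.2.2 - Ft (z.1, z.2.1, z.2.2.1)‖ 
      + K * Metric.infDist z.2.1 X
  have hΛ0 : Continuous Λ0 := by
    have i := Metric.continuous_infDist_pt X
    fun_prop
  let G0 : (Fin n → ℝ) → ℝ := fun y => H y + K * Metric.infDist y XT
  have hG0 : Continuous G0 := by
    have i := Metric.continuous_infDist_pt XT
    fun_prop
  let P : ℝ × (Fin n → ℝ) × (Fin m → ℝ) × (Fin n → ℝ) → 
      ℝ × (Fin n → ℝ) × (Fin m → ℝ) × (Fin n → ℝ) := fun z =>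
    (tclamp T z.1, vclamp R z.2.1, vclamp 1 z.2.2.1, vclamp M z.2.2.2)
  have hP : UniformContinuous P := by
    refine ((tclamp_uc T).comp uniformContinuous_fst).prodMk
      (((vclamp_uc R).comp (uniformContinuous_fst.comp uniformContinuous_snd)).prodMk
      (((vclamp_uc 1).comp (uniformContinuous_fst.comp
        (uniformContinuous_snd.comp uniformContinuous_snd))).prodMk
      ((vclamp_uc M).comp (uniformContinuous_snd.comp
        (uniformContinuous_snd.comp uniformContinuous_snd)))))
  obtain ⟨hΛu, C1, hC1⟩ := uc_bdd_of_clamp hΛ0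
    (Q := Icc 0 T ×ˢ Metric.closedBall 0 R ×ˢ Metric.closedBall 0 1 ×ˢ Metric.closedBall 0 M)
    (isCompact_Icc.prod ((isCompact_closedBall _ _).prod ((isCompact_closedBall _ _).prod
      (isCompact_closedBall _ _)))) hP (fun z => ⟨tclamp_mem hT.le _, by
        simpa using vclamp_norm hR _, by simpa using vclamp_norm zero_le_one _,
        by simpa using vclamp_norm hM0 _⟩)
  obtain ⟨hGu, C2, hC2⟩ := uc_bdd_of_clamp hG0 (Q := Metric.closedBall 0 R)
    (isCompact_closedBall _ _) (vclamp_uc R) (fun z => by simpa using vclamp_norm hR _)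
  set Λ : ℝ × (Fin n → ℝ) × (Fin m → ℝ) × (Fin n → ℝ) → ℝ := fun z => Λ0 (P z) with hΛdef
  set G : (Fin n → ℝ) → ℝ := fun y => G0 (vclamp R y) with hGdef
  let S : Set ((Fin m → ℝ) × (Fin n → ℝ)) := {a | a.1 ∈ Ubox m ∧ ‖a.2‖ ≤ M}
  have hSne : S.Nonempty := ⟨(0, 0), by
    refine ⟨(mem_Ubox_iff _).2 (by simp), by simpa using hM0⟩⟩
  have hΛeq : ∀ t ∈ Icc 0 T, ∀ x : Fin n → ℝ, ‖x‖ ≤ R → ∀ a ∈ S,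
      Λ (t, x, a) = h (t, x, a.1) + K * ‖a.2 - Fvec f g (t, x, a.1)‖
        + K * Metric.infDist x X := by
    intro t ht x hx a ha
    simp only [hΛdef, Λ0, P, hFt]
    rw [tclamp_eq ht, tclamp_eq ht, vclamp_eq hx, vclamp_eq ((mem_Ubox_iff _).1 ha.1),
      vclamp_eq ha.2]
  have hval := valF_le_integral (S := S) (Λ := Λ) (G := G) (C := max C1 C2) hM0 (fun a ha => ha.2)
    hSne hΛu hGu (fun z => (hC1 z).trans (le_max_left _ _))
    (fun z => (hC2 z).trans (le_max_right _ _)) hT x₀ η ηT (Fvec f g) ?_ ?_ ?_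
  · -- main part
    have hQ : ∫ z, Λ (z.1, z.2.1, z.2.2, Fvec f g z) ∂η + ∫ y, G y ∂ηT = Qcost h H η ηT := by
      unfold Qcost
      congr 1
      · refine integral_congr_ae ?_
        filter_upwards [hae] with z hz
        rw [hΛeq z.1 hz.1 z.2.1 ((hR0 _ hz.2.1).trans (le_max_left _ _)) (z.2.2, Fvec f g z)
          ⟨hz.2.2, hM z hz⟩]
        simp [Metric.infDist_zero_of_mem hz.2.1]
      · refine integral_congr_ae ?_
        filter_upwards [haeT] with y hy
        simp only [hGdef, G0]
        have hyR : ‖y‖ ≤ R := (hR0 _ (hXTsub hy)).trans (le_max_left _ _)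
        rw [vclamp_eq hyR]
        simp [Metric.infDist_zero_of_mem hy]
    rw [hQ] at hval
    have : Nonempty (Ctrl S) := by
      obtain ⟨a, ha⟩ := hSne
      exact ⟨⟨fun _ => a, measurable_const, fun _ => ha⟩⟩
    obtain ⟨c, hc⟩ := exists_lt_of_ciInf_lt (lt_of_le_of_lt hval (lt_add_of_pos_right _ he))
    have hSM : ∀ a ∈ S, ‖a.2‖ ≤ M := fun a ha => ha.2
    set x : ℝ → Fin n → ℝ := traj 0 x₀ c.1 with hx
    set u : ℝ → Fin m → ℝ := fun t => (c.1 t).1 with hu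
    have hxc : Continuous x := traj_continuous hSM c 0 x₀
    have hxlip : ∀ s t, dist (x s) (x t) ≤ M * |s - t| := by
      intro s t
      have : x s - x t = ∫ r in t..s, (c.1 r).2 := by
        simp only [hx, traj]
        rw [← intervalIntegral.integral_add_adjacent_intervals
          (ctrl_intervalIntegrable hSM c 0 t) (ctrl_intervalIntegrable hSM c t s)]
        abel
      rw [dist_eq_norm, this]
      exact intervalIntegral.norm_integral_le_of_norm_le_const fun r _ => hSM _ (c.2.2 r)
    have hx0 : x 0 = x₀ := by simp [hx, traj]
    have hxR : ∀ t ∈ Icc 0 T, ‖x t‖ ≤ R := fun t ht => by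
      have h1 := hxlip t 0
      rw [hx0, dist_eq_norm, sub_zero, abs_of_nonneg ht.1] at h1
      have h2 : M * t ≤ M * T := mul_le_mul_of_nonneg_left ht.2 hM0
      have h3 : ‖x t‖ ≤ ‖x₀‖ + ‖x t - x₀‖ := by
        have := norm_add_le x₀ (x t - x₀); rwa [add_sub_cancel] at this
      exact le_trans (by linarith) (le_max_right R0 _)
    have hum : Measurable u := c.2.1.fst
    have hqm : Measurable (fun t => (c.1 t).2) := c.2.1.snd
    have hFtb : ∃ B, ∀ t ∈ Icc 0 T, ‖Ft (t, x t, u t)‖ ≤ B := by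
      obtain ⟨B, hB⟩ := ((isCompact_Icc (a := (0:ℝ)) (b := T)).prod
        ((isCompact_closedBall (0 : Fin n → ℝ) R).prod
        (isCompact_Ubox m))).exists_bound_of_continuousOn hFtc.continuousOn
      exact ⟨B, fun t ht => hB _ ⟨ht, by simpa using hxR t ht, (c.2.2 t).1⟩⟩
    obtain ⟨B, hB⟩ := hFtb
    have hpm : Measurable (fun t => (t, x t, u t)) :=
      measurable_id.prodMk (hxc.measurable.prodMk hum)
    have iF : IntegrableOn (fun t => Ft (t, x t, u t)) (Icc 0 T) volume := by
      refine Measure.integrableOn_of_bounded (M := B) (by simp)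
        (hFtc.measurable.comp hpm).aestronglyMeasurable ?_
      filter_upwards [ae_restrict_mem measurableSet_Icc] with t ht using hB t ht
    have iq : IntegrableOn (fun t => (c.1 t).2) (Icc 0 T) volume :=
      Measure.integrableOn_of_bounded (M := M) (by simp) hqm.aestronglyMeasurable
        (ae_of_all _ fun t => hSM _ (c.2.2 t))
    have ih : IntegrableOn (fun t => h (t, x t, u t)) (Icc 0 T) volume := by
      obtain ⟨B, hB⟩ := ((isCompact_Icc (a := (0:ℝ)) (b := T)).prod
        ((isCompact_closedBall (0 : Fin n → ℝ) R).prod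
        (isCompact_Ubox m))).exists_bound_of_continuousOn hh.continuousOn
      refine Measure.integrableOn_of_bounded (M := B) (by simp)
        (hh.measurable.comp hpm).aestronglyMeasurable ?_
      filter_upwards [ae_restrict_mem measurableSet_Icc] with t ht
      exact hB _ ⟨ht, by simpa using hxR t ht, (c.2.2 t).1⟩
    have idst : IntegrableOn (fun t => Metric.infDist (x t) X) (Icc 0 T) volume :=
      ((Metric.continuous_infDist_pt X).comp hxc).continuousOn.integrableOn_compact isCompact_Icc
    have idef : IntegrableOn (fun t => ‖(c.1 t).2 - Ft (t, x t, u t)‖) (Icc 0 T) volume :=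
      (iq.sub iF).norm
    set a1 := ∫ t in Icc 0 T, ‖(c.1 t).2 - Ft (t, x t, u t)‖ with ha1
    set a2 := ∫ t in Icc 0 T, Metric.infDist (x t) X with ha2
    set a3 := Metric.infDist (x T) XT with ha3
    have ha1n : 0 ≤ a1 := integral_nonneg fun t => norm_nonneg _
    have ha2n : 0 ≤ a2 := integral_nonneg fun t => Metric.infDist_nonneg
    have ha3n : 0 ≤ a3 := Metric.infDist_nonneg
    refine ⟨x, u, a1 + a2 + a3, hum, fun t => (c.2.2 t).1, hx0, hxlip, 
      ?_, by linarith, by linarith, ?_⟩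
    · intro t ht
      have hsub : Icc 0 t ⊆ Icc 0 T := Icc_subset_Icc_right ht.2
      have e1 : ∫ s in Icc 0 t, Fvec f g (s, x s, u s) = ∫ s in Icc 0 t, Ft (s, x s, u s) := by
        refine setIntegral_congr_fun measurableSet_Icc fun s hs => ?_
        simp only [hFt]; rw [tclamp_eq (hsub hs)]
      have e2 : x t - x₀ = ∫ s in Icc 0 t, (c.1 s).2 := by
        rw [integral_Icc_eq_integral_Ioc, ← intervalIntegral.integral_of_le ht.1]
        simp [hx, traj]
      rw [e1, e2, ← integral_sub (iq.mono_set hsub) (iF.mono_set hsub)]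
      refine (norm_integral_le_integral_norm _).trans ?_
      have : ∫ s in Icc 0 t, ‖(c.1 s).2 - Ft (s, x s, u s)‖ ≤ a1 :=
        setIntegral_mono_set idef (ae_of_all _ fun t => norm_nonneg _) hsub.eventuallyLE
      linarith
    · have e1 : ccost T Λ G 0 x₀ c.1 = Jcost T h H x u + K * (a1 + a2 + a3) := by
        unfold ccost Jcost
        rw [intervalIntegral.integral_of_le hT.le, ← integral_Icc_eq_integral_Ioc]
        have e2 : ∫ s in Icc 0 T, Λ (s, traj 0 x₀ c.1 s, c.1 s)
            = ∫ s in Icc 0 T, (h (s, x s, u s) + K * ‖(c.1 s).2 - Ft (s, x s, u s)‖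
              + K * Metric.infDist (x s) X) := by
          refine setIntegral_congr_fun measurableSet_Icc fun s hs => ?_
          rw [hΛeq s hs _ (hxR s hs) _ (c.2.2 s)]
          simp only [hFt, tclamp_eq hs]
          rfl
        have i12 : IntegrableOn (fun s => h (s, x s, u s)
            + K * ‖(c.1 s).2 - Ft (s, x s, u s)‖) (Icc 0 T) volume := ih.add (idef.const_mul K)
        rw [e2, integral_add i12 (idst.const_mul K),
          integral_add ih (idef.const_mul K), integral_const_mul, integral_const_mul]
        have e3 : G (traj 0 x₀ c.1 T) = H (x T) + K * a3 := by
          simp only [hGdef, G0]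
          rw [vclamp_eq (hxR T ⟨hT.le, le_rfl⟩)]
        rw [e3]
        ring
      rw [← e1]; exact hc.le
  · filter_upwards [hae] with z hz
    exact ⟨hz.1, hz.2.2, hM z hz⟩
  · rw [← hrestr]; exact hFc.aestronglyMeasurable hKc.measurableSet
  · intro v hv
    refine ⟨?_, ?_, ?_⟩
    · rw [← hrestr]
      refine ContinuousOn.integrableOn_compact hKc ?_
      have h1 : Continuous (fun z : ℝ × (Fin n → ℝ) × (Fin m → ℝ) =>
          fderiv ℝ v (z.1, z.2.1)) :=
        (hv.continuous_fderiv one_ne_zero).comp (by fun_prop)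
      exact h1.continuousOn.clm_apply (continuousOn_const.prodMk hFc)
    · rw [← hrestrT]
      refine ContinuousOn.integrableOn_compact hXT ?_
      have hp : Continuous (fun y : Fin n → ℝ => (T, y)) := by fun_prop
      exact (hv.continuous.comp hp).continuousOn
    · rw [← hLiou v hv]
      simp only [LFop_eq]

lemma lip_limit {n : ℕ} {T M : ℝ} (hT : 0 ≤ T) (hM : 0 ≤ M) {x₀ : Fin n → ℝ}
    {xN : ℕ → ℝ → Fin n → ℝ} (h0 : ∀ N, xN N 0 = x₀)
    (hlip : ∀ N s t, dist (xN N s) (xN N t) ≤ M * |s - t|) (U : Ultrafilter ℕ) :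
    ∃ x : ℝ → Fin n → ℝ, x 0 = x₀ ∧ (∀ s t, dist (x s) (x t) ≤ M * |s - t|) ∧
      ∀ d > 0, ∀ᶠ N in U, ∀ t ∈ Icc 0 T, dist (xN N t) (x t) ≤ d := by
  let A : Set (BoundedContinuousFunction (Icc (0:ℝ) T) (Fin n → ℝ)) :=
    {p | (∀ s t, dist (p s) (p t) ≤ M * dist s t) ∧ ∀ t, p t ∈ Metric.closedBall x₀ (M * T)}
  have hAc : IsCompact A := by
    refine BoundedContinuousFunction.arzela_ascoli₂ (Metric.closedBall x₀ (M * T))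
      (isCompact_closedBall _ _) A ?_ (fun p t hp => hp.2 t) ?_
    · have : A = (⋂ s, ⋂ t, {p | dist (p s) (p t) ≤ M * dist s t}) ∩
          ⋂ t, {p | p t ∈ Metric.closedBall x₀ (M * T)} := by
        ext p
        simp only [A, mem_ofPred_eq, mem_inter_iff, mem_iInter]
      rw [this]
      refine IsClosed.inter (isClosed_iInter fun s => isClosed_iInter fun t => ?_)
        (isClosed_iInter fun t => ?_)
      · exact isClosed_le ((continuous_eval_const _).dist
          (continuous_eval_const _)) continuous_const
      · exact Metric.isClosed_closedBall.preimage (continuous_eval_const _)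
    · refine UniformEquicontinuous.equicontinuous ?_
      have := LipschitzWith.uniformEquicontinuous
        (fun p : A => ((p : BoundedContinuousFunction (Icc (0:ℝ) T) (Fin n → ℝ)) : 
          Icc (0:ℝ) T → Fin n → ℝ)) ⟨M, hM⟩
        (fun p => LipschitzWith.of_dist_le_mul fun s t => p.2.1 s t)
      exact this
  have hcont : ∀ N, Continuous (xN N) := fun N =>
    (LipschitzWith.of_dist_le_mul (K := ⟨M, hM⟩) fun s t => hlip N s t).continuous
  let p : ℕ → BoundedContinuousFunction (Icc (0:ℝ) T) (Fin n → ℝ) := fun N =>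
    BoundedContinuousFunction.mkOfCompact ⟨fun t => xN N t, (hcont N).comp continuous_subtype_val⟩
  have hp : ∀ N (t : Icc (0:ℝ) T), p N t = xN N t := fun N t => rfl
  have hpA : ∀ N, p N ∈ A := fun N => by
    refine ⟨fun s t => ?_, fun t => ?_⟩
    · rw [hp, hp]; exact hlip N s t
    · rw [hp, Metric.mem_closedBall, ← h0 N]
      refine (hlip N _ _).trans ?_
      rw [sub_zero, abs_of_nonneg t.2.1]
      exact mul_le_mul_of_nonneg_left t.2.2 hM
  obtain ⟨q, hqA, hq⟩ := hAc.ultrafilter_le_nhds (U.map p) (by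
    rw [le_principal_iff]
    exact Filter.mem_map.2 (Filter.Eventually.of_forall hpA))
  have hq' : Tendsto p U (𝓝 q) := hq
  have hd : ∀ d > 0, ∀ᶠ N in U, ∀ t ∈ Icc 0 T, dist (xN N t) (q ⟨tclamp T t, tclamp_mem hT t⟩) ≤ d := by
    intro d hd
    filter_upwards [hq' (Metric.closedBall_mem_nhds q hd)] with N hN t ht
    have h1 := (BoundedContinuousFunction.dist_coe_le_dist (f := p N) (g := q) ⟨t, ht⟩).trans hN
    rw [hp] at h1
    have h2 : (⟨tclamp T t, tclamp_mem hT t⟩ : Icc (0:ℝ) T) = ⟨t, ht⟩ := Subtype.ext (tclamp_eq ht)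
    rw [h2]
    exact h1
  refine ⟨fun t => q ⟨tclamp T t, tclamp_mem hT t⟩, ?_, ?_, hd⟩
  · refine eq_of_forall_dist_le fun e he => ?_
    obtain ⟨N, hN⟩ := (hd e he).exists
    have := hN 0 ⟨le_rfl, hT⟩
    rwa [h0, dist_comm] at this
  · intro s t
    refine (hqA.1 _ _).trans (mul_le_mul_of_nonneg_left ?_ hM)
    have : LipschitzWith 1 (tclamp T) := (LipschitzWith.id.const_min T).const_max 0
    have h2 := this.dist_le_mul s t
    rw [NNReal.coe_one, one_mul] at h2
    exact h2

lemma young_limit {m : ℕ} {T : ℝ} (hT : 0 ≤ T) {uN : ℕ → ℝ → Fin m → ℝ}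
    (hum : ∀ N, Measurable (uN N)) (huU : ∀ N t, uN N t ∈ Ubox m) (U : Ultrafilter ℕ) :
    ∃ κ : Kernel ℝ (Fin m → ℝ), IsMarkovKernel κ ∧
      (∀ᵐ t ∂(volume.restrict (Icc 0 T)), ∀ᵐ u ∂(κ t), u ∈ Ubox m) ∧
      ∀ ψ : ℝ × (Fin m → ℝ) → ℝ, Continuous ψ → ∀ S : Set ℝ, MeasurableSet S → S ⊆ Icc 0 T →
        IntegrableOn (fun t => ∫ u, ψ (t, u) ∂(κ t)) S volume ∧
        Tendsto (fun N => ∫ t in S, ψ (t, uN N t)) U (𝓝 (∫ t in S, ∫ u, ψ (t, u) ∂(κ t))) := by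
  set l : Measure ℝ := volume.restrict (Icc 0 T) with hl
  have hlf : IsFiniteMeasure l := by rw [hl]; infer_instance
  have hpm : ∀ N, Measurable (fun t => (t, uN N t)) := fun N => measurable_id.prodMk (hum N)
  let K : Set (ℝ × (Fin m → ℝ)) := Icc 0 T ×ˢ Ubox m
  have hK : IsCompact K := isCompact_Icc.prod (isCompact_Ubox m)
  let p : ℕ → FiniteMeasure (ℝ × (Fin m → ℝ)) := fun N => ⟨l.map (fun t => (t, uN N t)), inferInstance⟩
  have hlmem : ∀ᵐ t ∂l, t ∈ Icc 0 T := ae_restrict_mem measurableSet_Icc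
  have hpA : ∀ N, p N ∈ {μ : FiniteMeasure (ℝ × (Fin m → ℝ)) | μ.mass ≤ (l univ).toNNReal ∧ μ Kᶜ = 0} := by
    intro N
    constructor
    · have : ((p N : Measure (ℝ × (Fin m → ℝ))) univ) = l univ := by
        change (l.map (fun t => (t, uN N t))) univ = _
        rw [Measure.map_apply (hpm N) MeasurableSet.univ, preimage_univ]
      change (((p N : Measure (ℝ × (Fin m → ℝ))) univ)).toNNReal ≤ _
      rw [this]
    · rw [FiniteMeasure.null_iff_toMeasure_null]
      change (l.map (fun t => (t, uN N t))) _ = _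
      rw [Measure.map_apply (hpm N) hK.measurableSet.compl]
      have : ∀ᵐ t ∂l, t ∉ (fun t => (t, uN N t)) ⁻¹' Kᶜ := by
        filter_upwards [hlmem] with t ht
        simp only [mem_preimage, mem_compl_iff, not_not]
        exact ⟨ht, huU N t⟩
      exact measure_eq_zero_iff_ae_notMem.2 this
  obtain ⟨ν, hνA, hν⟩ := (isCompact_setOfPred_finiteMeasure_le_of_isCompact (l univ).toNNReal
    hK).ultrafilter_le_nhds (U.map p) (by
      rw [le_principal_iff]
      exact Filter.mem_map.2 (Filter.Eventually.of_forall hpA))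
  have hν' : Tendsto p U (𝓝 ν) := hν
  rw [FiniteMeasure.tendsto_iff_forall_integral_tendsto] at hν'
  have hν2 : ∀ b : BoundedContinuousFunction (ℝ × (Fin m → ℝ)) ℝ,
      Tendsto (fun N => ∫ t, b (t, uN N t) ∂l) U (𝓝 (∫ z, b z ∂(ν : Measure _))) := by
    intro b
    refine (hν' b).congr fun N => ?_
    change ∫ z, b z ∂(l.map (fun t => (t, uN N t))) = _
    rw [integral_map (hpm N).aemeasurable b.continuous.aestronglyMeasurable]
  have hfst : (ν : Measure (ℝ × (Fin m → ℝ))).fst = l := by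
    refine ext_of_forall_integral_eq_of_IsFiniteMeasure fun b => ?_
    rw [Measure.fst, integral_map measurable_fst.aemeasurable b.continuous.aestronglyMeasurable]
    have h1 := hν2 (b.compContinuous ⟨Prod.fst, continuous_fst⟩)
    exact tendsto_nhds_unique h1 tendsto_const_nhds
  set κ := (ν : Measure (ℝ × (Fin m → ℝ))).condKernel with hκ
  have hdis : l ⊗ₘ κ = (ν : Measure (ℝ × (Fin m → ℝ))) := by
    rw [← hfst]; exact Measure.disintegrate _ _
  have hsupp : ∀ᵐ t ∂l, ∀ᵐ u ∂(κ t), u ∈ Ubox m := by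
    have h1 : ∀ᵐ z ∂(ν : Measure (ℝ × (Fin m → ℝ))), z ∈ K := by
      have := hνA.2
      rw [FiniteMeasure.null_iff_toMeasure_null] at this
      exact this
    rw [← hdis] at h1
    filter_upwards [Measure.ae_ae_of_ae_compProd h1] with t ht
    filter_upwards [ht] with u hu using hu.2
  refine ⟨κ, inferInstance, hsupp, ?_⟩
  intro ψ hψ S hS hSI
  -- clamp
  obtain ⟨hcu, C, hC⟩ := uc_bdd_of_clamp hψ (Q := Icc 0 T ×ˢ Metric.closedBall 0 1)
    (P := fun z => (tclamp T z.1, vclamp 1 z.2))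
    (isCompact_Icc.prod (isCompact_closedBall _ _))
    (((tclamp_uc T).comp uniformContinuous_fst).prodMk ((vclamp_uc 1).comp uniformContinuous_snd))
    (fun z => ⟨tclamp_mem hT _, by simpa using vclamp_norm zero_le_one _⟩)
  set ψc : ℝ × (Fin m → ℝ) → ℝ := fun z => ψ (tclamp T z.1, vclamp 1 z.2) with hψc
  have hψcc : Continuous ψc := hcu.continuous
  have hC0 : 0 ≤ C := (abs_nonneg _).trans (hC (0, 0))
  have hceq : ∀ t ∈ Icc 0 T, ∀ u ∈ Ubox m, ψc (t, u) = ψ (t, u) := by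
    intro t ht u hu
    simp only [hψc]; rw [tclamp_eq ht, vclamp_eq ((mem_Ubox_iff u).1 hu)]
  have hlS : l.restrict S = volume.restrict S := by
    rw [hl, Measure.restrict_restrict hS, inter_eq_left.2 hSI]
  have hae : ∀ᵐ t ∂l, ∫ u, ψc (t, u) ∂(κ t) = ∫ u, ψ (t, u) ∂(κ t) := by
    filter_upwards [hsupp, hlmem] with t ht htI
    refine integral_congr_ae ?_
    filter_upwards [ht] with u hu using hceq t htI u hu
  have hint : Integrable ψc (ν : Measure (ℝ × (Fin m → ℝ))) :=
    Integrable.of_bound hψcc.aestronglyMeasurable C (ae_of_all _ hC)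
  have hintκ : Integrable (fun t => ∫ u, ψc (t, u) ∂(κ t)) l := by
    have hsm : StronglyMeasurable (fun t => ∫ u, ψc (t, u) ∂(κ t)) :=
      StronglyMeasurable.integral_kernel_prod_right (f := fun t u => ψc (t, u))
        hψcc.stronglyMeasurable
    refine Integrable.of_bound hsm.aestronglyMeasurable C (ae_of_all _ fun t => ?_)
    have := norm_integral_le_of_norm_le_const (μ := κ t) (f := fun u => ψc (t, u))
      (C := C) (ae_of_all _ fun u => hC _)
    simpa using this
  have hintκ' : Integrable (fun t => ∫ u, ψ (t, u) ∂(κ t)) l := hintκ.congr hae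
  refine ⟨by rw [IntegrableOn, ← hlS]; exact hintκ'.integrableOn, ?_⟩
  set χ : ℝ → ℝ := S.indicator (fun _ => 1) with hχ
  have hχm : Measurable χ := measurable_const.indicator hS
  have hχi : Integrable χ l := (integrable_const 1).indicator hS
  have hform1 : ∀ N, ∫ t in S, ψ (t, uN N t) = ∫ t, χ t * ψc (t, uN N t) ∂l := by
    intro N
    have : ∀ t, χ t * ψc (t, uN N t) = S.indicator (fun t => ψ (t, uN N t)) t := by
      intro t
      by_cases ht : t ∈ S
      · simp [hχ, ht, hceq t (hSI ht) _ (huU N t)]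
      · simp [hχ, ht]
    simp only [this]
    rw [integral_indicator hS, hlS]
  have hform2 : ∫ t in S, ∫ u, ψ (t, u) ∂(κ t) = ∫ z, χ z.1 * ψc z ∂(ν : Measure (ℝ × (Fin m → ℝ))) := by
    rw [← hdis, Measure.integral_compProd, ← hlS, ← integral_indicator hS]
    · refine integral_congr_ae ?_
      filter_upwards [hae] with t ht
      simp only [integral_const_mul]
      rw [ht]
      by_cases hts : t ∈ S <;> simp [hχ, hts]
    · rw [hdis]
      refine hint.bdd_mul (c := 1) (hχm.comp measurable_fst).aestronglyMeasurable (ae_of_all _ fun z => ?_)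
      by_cases hts : z.1 ∈ S <;> simp [hχ, hts]
  simp only [hform1]
  rw [hform2, Metric.tendsto_nhds]
  intro e he
  obtain ⟨χ', hχ's, hχ'e, hχ'c, hχ'i⟩ := hχi.exists_hasCompactSupport_integral_sub_le
    (ε := e / (4 * (C + 1))) (by positivity)
  obtain ⟨D, hD⟩ := hχ's.exists_bound_of_continuous hχ'c
  let b : BoundedContinuousFunction (ℝ × (Fin m → ℝ)) ℝ :=
    BoundedContinuousFunction.ofNormedAddCommGroup (fun z => χ' z.1 * ψc z)
      ((hχ'c.comp continuous_fst).mul hψcc) (D * C) (fun z => by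
        rw [norm_mul]
        exact mul_le_mul (hD _) (hC z) (norm_nonneg _) ((norm_nonneg _).trans (hD 0)))
  have hb := Metric.tendsto_nhds.1 (hν2 b) (e / 4) (by positivity)
  have hbz : ∀ z, b z = χ' z.1 * ψc z := fun z => rfl
  have hsmall : C * (e / (4 * (C + 1))) ≤ e / 4 := by
    rw [mul_div_assoc', div_le_div_iff₀ (by positivity) (by positivity)]
    nlinarith
  have hdiff : Integrable (fun t => χ t - χ' t) l := hχi.sub hχ'i
  have key1 : ∀ N, |∫ t, χ t * ψc (t, uN N t) ∂l - ∫ t, b (t, uN N t) ∂l| ≤ e / 4 := by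
    intro N
    have hm1 : AEStronglyMeasurable (fun t => ψc (t, uN N t)) l :=
      (hψcc.measurable.comp (hpm N)).aestronglyMeasurable
    have i1 : Integrable (fun t => χ t * ψc (t, uN N t)) l :=
      hχi.mul_bdd (c := C) hm1 (ae_of_all _ fun t => hC _)
    have i2 : Integrable (fun t => χ' t * ψc (t, uN N t)) l :=
      hχ'i.mul_bdd (c := C) hm1 (ae_of_all _ fun t => hC _)
    simp only [hbz]
    rw [← integral_sub i1 i2, ← Real.norm_eq_abs]
    refine (norm_integral_le_of_norm_le (hdiff.norm.const_mul C) (ae_of_all _ fun t => ?_)).trans ?_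
    · rw [← sub_mul, norm_mul, mul_comm]
      exact mul_le_mul_of_nonneg_right (hC _) (norm_nonneg _)
    · rw [integral_const_mul]
      exact (mul_le_mul_of_nonneg_left hχ'e hC0).trans hsmall
  have key2 : |∫ z, χ z.1 * ψc z ∂(ν : Measure (ℝ × (Fin m → ℝ))) - ∫ z, b z ∂(ν : Measure (ℝ × (Fin m → ℝ)))| ≤ e / 4 := by
    have hcomp : ∀ w : ℝ → ℝ, Integrable w l → Integrable (fun z : ℝ × (Fin m → ℝ) => w z.1)
        (ν : Measure (ℝ × (Fin m → ℝ))) := fun w hw => by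
      rw [← hfst] at hw
      exact hw.comp_measurable measurable_fst
    have i1 : Integrable (fun z => χ z.1 * ψc z) (ν : Measure (ℝ × (Fin m → ℝ))) :=
      (hcomp χ hχi).mul_bdd (c := C) hψcc.aestronglyMeasurable (ae_of_all _ fun t => hC _)
    have i2 : Integrable (fun z => χ' z.1 * ψc z) (ν : Measure (ℝ × (Fin m → ℝ))) :=
      (hcomp χ' hχ'i).mul_bdd (c := C) hψcc.aestronglyMeasurable (ae_of_all _ fun t => hC _)
    simp only [hbz]
    rw [← integral_sub i1 i2, ← Real.norm_eq_abs]
    refine (norm_integral_le_of_norm_le ((hcomp _ hdiff).norm.const_mul C)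
      (ae_of_all _ fun t => ?_)).trans ?_
    · rw [← sub_mul, norm_mul, mul_comm]
      exact mul_le_mul_of_nonneg_right (hC _) (norm_nonneg _)
    · rw [integral_const_mul]
      have : ∫ z : ℝ × (Fin m → ℝ), ‖χ z.1 - χ' z.1‖ ∂(ν : Measure (ℝ × (Fin m → ℝ)))
          = ∫ t, ‖χ t - χ' t‖ ∂l := by
        have h3 : AEStronglyMeasurable (fun t => ‖χ t - χ' t‖) 
          ((ν : Measure (ℝ × (Fin m → ℝ))).map Prod.fst) :=
          ((hχm.sub hχ'c.measurable).norm).aestronglyMeasurable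
        rw [← hfst, Measure.fst, integral_map measurable_fst.aemeasurable h3]
      rw [this]
      exact (mul_le_mul_of_nonneg_left hχ'e hC0).trans hsmall
  filter_upwards [hb] with N hN
  rw [Real.dist_eq] at hN ⊢
  have k1 := abs_le.1 (key1 N)
  have k2 := abs_le.1 key2
  have k3 := abs_lt.1 hN
  rw [abs_lt]
  constructor <;> linarith [k1.1, k1.2, k2.1, k2.2, k3.1, k3.2]

lemma integrableOn_traj {n m : ℕ} {E : Type*} [NormedAddCommGroup E] [MeasurableSpace E]
    [BorelSpace E] [SecondCountableTopology E] {T : ℝ}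
    {Ψ : ℝ × (Fin n → ℝ) × (Fin m → ℝ) → E} (hΨ : Continuous Ψ) {x : ℝ → Fin n → ℝ}
    (hx : Continuous x) {u : ℝ → Fin m → ℝ} (hu : Measurable u) (huU : ∀ t, u t ∈ Ubox m) :
    IntegrableOn (fun t => Ψ (t, x t, u t)) (Icc 0 T) volume := by
  obtain ⟨B, hB⟩ := ((isCompact_Icc (a := (0:ℝ)) (b := T)).prod
    (((isCompact_Icc (a := (0:ℝ)) (b := T)).image hx).prod
    (isCompact_Ubox m))).exists_bound_of_continuousOn hΨ.continuousOn
  have hpm : Measurable (fun t => (t, x t, u t)) :=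
    measurable_id.prodMk (hx.measurable.prodMk hu)
  refine Measure.integrableOn_of_bounded (M := B) (by simp)
    (hΨ.measurable.comp hpm).aestronglyMeasurable ?_
  filter_upwards [ae_restrict_mem measurableSet_Icc] with t ht
  exact hB _ ⟨ht, mem_image_of_mem _ ht, huU t⟩

lemma cont_of_lip {n : ℕ} {M : ℝ} (hM : 0 ≤ M) {x : ℝ → Fin n → ℝ}
    (h : ∀ s t, dist (x s) (x t) ≤ M * |s - t|) : Continuous x :=
  (LipschitzWith.of_dist_le_mul (K := ⟨M, hM⟩) fun s t => h s t).continuous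

lemma bound_of_lip {n : ℕ} {T M : ℝ} (hM : 0 ≤ M) {x₀ : Fin n → ℝ} {x : ℝ → Fin n → ℝ}
    (h0 : x 0 = x₀)
    (h : ∀ s t, dist (x s) (x t) ≤ M * |s - t|) : ∀ t ∈ Icc 0 T, 
      x t ∈ Metric.closedBall x₀ (M * T) := by
  intro t ht
  rw [Metric.mem_closedBall, ← h0]
  refine (h _ _).trans ?_
  rw [sub_zero, abs_of_nonneg ht.1]
  exact mul_le_mul_of_nonneg_left ht.2 hM

lemma traj_young {n m : ℕ} {T M : ℝ} (hT : 0 ≤ T) (hM : 0 ≤ M) {x₀ : Fin n → ℝ}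
    {xN : ℕ → ℝ → Fin n → ℝ} (h0 : ∀ N, xN N 0 = x₀)
    (hlip : ∀ N s t, dist (xN N s) (xN N t) ≤ M * |s - t|) 
    {uN : ℕ → ℝ → Fin m → ℝ}
    (hum : ∀ N, Measurable (uN N)) (huU : ∀ N t, uN N t ∈ Ubox m)
    {U : Ultrafilter ℕ} {x : ℝ → Fin n → ℝ} (hx0 : x 0 = x₀)
    (hxlip : ∀ s t, dist (x s) (x t) ≤ M * |s - t|)
    (hconv : ∀ d > 0, ∀ᶠ N in U, ∀ t ∈ Icc 0 T, dist (xN N t) (x t) ≤ d)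
    {κ : Kernel ℝ (Fin m → ℝ)}
    (hκ : ∀ ψ : ℝ × (Fin m → ℝ) → ℝ, Continuous ψ → ∀ S : Set ℝ, MeasurableSet S → S ⊆ Icc 0 T →
        IntegrableOn (fun t => ∫ u, ψ (t, u) ∂(κ t)) S volume ∧
        Tendsto (fun N => ∫ t in S, ψ (t, uN N t)) U (𝓝 (∫ t in S, ∫ u, ψ (t, u) ∂(κ t))))
    {Ψ : ℝ × (Fin n → ℝ) × (Fin m → ℝ) → ℝ} (hΨ : Continuous Ψ)
    {S : Set ℝ} (hS : MeasurableSet S) (hSI : S ⊆ Icc 0 T) :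
    Tendsto (fun N => ∫ t in S, Ψ (t, xN N t, uN N t)) U
      (𝓝 (∫ t in S, ∫ u, Ψ (t, x t, u) ∂(κ t))) := by
  have hxc := cont_of_lip hM hxlip
  have h1 := (hκ (fun z => Ψ (z.1, x z.1, z.2)) (by fun_prop) S hS hSI).2
  have h2 : Tendsto (fun N => (∫ t in S, Ψ (t, xN N t, uN N t)) - ∫ t in S, Ψ (t, x t, uN N t)) U
      (𝓝 0) := by
    have hK := ((isCompact_Icc (a := (0:ℝ)) (b := T)).prod
      ((isCompact_closedBall x₀ (M * T)).prod
      (isCompact_Ubox m))).uniformContinuousOn_of_continuous hΨ.continuousOn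
    rw [Metric.uniformContinuousOn_iff] at hK
    rw [Metric.tendsto_nhds]
    intro e he
    obtain ⟨d, hd, hdK⟩ := hK (e / (2 * (T + 1))) (by positivity)
    filter_upwards [hconv (d / 2) (by positivity)] with N hN
    rw [dist_zero_right, ← integral_sub 
      ((integrableOn_traj hΨ (cont_of_lip hM (hlip N)) (hum N) (huU N)).mono_set hSI)
      ((integrableOn_traj hΨ hxc (hum N) (huU N)).mono_set hSI)]
    have hvol : volume S ≤ ENNReal.ofReal T := by
      have := measure_mono (μ := volume) hSI
      rwa [Real.volume_Icc, sub_zero] at this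
    have hvr : volume.real S ≤ T := ENNReal.toReal_le_of_le_ofReal hT hvol
    have hb := norm_setIntegral_le_of_norm_le_const (μ := volume) (s := S) 
      (f := fun t => Ψ (t, xN N t, uN N t) - Ψ (t, x t, uN N t)) (C := e / (2 * (T + 1)))
      (lt_of_le_of_lt hvol ENNReal.ofReal_lt_top) (fun t ht => by
        have htI := hSI ht
        have := hdK (t, xN N t, uN N t) ⟨htI, bound_of_lip hM (h0 N) (hlip N) t htI, huU N t⟩
          (t, x t, uN N t) ⟨htI, bound_of_lip hM hx0 hxlip t htI, huU N t⟩ (by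
            rw [Prod.dist_eq, Prod.dist_eq, dist_self, dist_self]
            have := hN t htI
            simp only [max_lt_iff]
            exact ⟨hd, by linarith, hd⟩)
        rw [dist_eq_norm] at this
        exact this.le)
    refine lt_of_le_of_lt hb ?_
    have : e / (2 * (T + 1)) * volume.real S ≤ e / (2 * (T + 1)) * T :=
      mul_le_mul_of_nonneg_left hvr (by positivity)
    refine lt_of_le_of_lt this ?_
    rw [div_mul_eq_mul_div, div_lt_iff₀ (by positivity)]
    nlinarith
  have h3 := h2.add h1
  simp only [sub_add_cancel, zero_add] at h3
  exact h3

lemma compactness {n m : ℕ} {T M : ℝ} (hT : 0 < T) (hM : 0 ≤ M)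
    {X XT : Set (Fin n → ℝ)} (hX : IsCompact X) (hXT : IsCompact XT)
    (hXne : X.Nonempty) (hXTne : XT.Nonempty) {x₀ : Fin n → ℝ}
    {f : ℝ × (Fin n → ℝ) → Fin n → ℝ} {g : ℝ × (Fin n → ℝ) → Fin n → Fin m → ℝ}
    (hf : ContinuousOn f (Set.Icc (0 : ℝ) T ×ˢ Set.univ))
    (hg : ContinuousOn g (Set.Icc (0 : ℝ) T ×ˢ Set.univ))
    {h : ℝ × (Fin n → ℝ) × (Fin m → ℝ) → ℝ} {H : (Fin n → ℝ) → ℝ}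
    (hh : Continuous h) (hH : Continuous H)
    (hcvx : ∀ t ∈ Icc 0 T, ∀ x : Fin n → ℝ, ConvexOn ℝ Set.univ (fun u => h (t, x, u)))
    {xN : ℕ → ℝ → Fin n → ℝ} (h0 : ∀ N, xN N 0 = x₀)
    (hlip : ∀ N s t, dist (xN N s) (xN N t) ≤ M * |s - t|) 
    {uN : ℕ → ℝ → Fin m → ℝ}
    (hum : ∀ N, Measurable (uN N)) (huU : ∀ N t, uN N t ∈ Ubox m)
    (U : Ultrafilter ℕ) {a : ℕ → ℝ} (ha : Tendsto a U (𝓝 0))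
    (hdef : ∀ N, ∀ t ∈ Icc 0 T,
      ‖xN N t - x₀ - ∫ s in Icc 0 t, Fvec f g (s, xN N s, uN N s)‖ ≤ a N)
    (hXd : ∀ N, (∫ t in Icc 0 T, Metric.infDist (xN N t) X) ≤ a N)
    (hXTd : ∀ N, Metric.infDist (xN N T) XT ≤ a N) :
    ∃ (x : ℝ → Fin n → ℝ) (u : ℝ → Fin m → ℝ),
      IsAdmissiblePair T X XT x₀ f g x u ∧ (∀ t, u t ∈ Ubox m) ∧
      (∀ s t, dist (x s) (x t) ≤ M * |s - t|) ∧
      (∀ φ : ℝ × (Fin n → ℝ) → ℝ, Continuous φ →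
        Tendsto (fun N => ∫ t in Icc 0 T, φ (t, xN N t)) U (𝓝 (∫ t in Icc 0 T, φ (t, x t)))) ∧
      (∀ (c : ℕ → ℝ) (c0 : ℝ), Tendsto c U (𝓝 c0) → (∀ N, Jcost T h H (xN N) (uN N) ≤ c N) →
        Jcost T h H x u ≤ c0) := by
  obtain ⟨x, hx0, hxlip, hconv⟩ := lip_limit hT.le hM h0 hlip U
  obtain ⟨κ, hκM, hκU, hκ⟩ := young_limit hT.le hum huU U
  have hxc := cont_of_lip hM hxlip
  have hlim : ∀ {Ψ : ℝ × (Fin n → ℝ) × (Fin m → ℝ) → ℝ}, Continuous Ψ → ∀ {S : Set ℝ},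
      MeasurableSet S → S ⊆ Icc 0 T → 
      Tendsto (fun N => ∫ t in S, Ψ (t, xN N t, uN N t)) U
      (𝓝 (∫ t in S, ∫ u, Ψ (t, x t, u) ∂(κ t))) := fun hΨ _ hS hSI =>
    traj_young hT.le hM h0 hlip hum huU hx0 hxlip hconv hκ hΨ hS hSI
  have hpt : ∀ t ∈ Icc 0 T, Tendsto (fun N => xN N t) U (𝓝 (x t)) := by
    intro t ht
    rw [Metric.tendsto_nhds]
    intro e he
    filter_upwards [hconv (e / 2) (by positivity)] with N hN
    have := hN t ht
    linarith
  have hphi : ∀ φ : ℝ × (Fin n → ℝ) → ℝ, Continuous φ →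
        Tendsto (fun N => ∫ t in Icc 0 T, φ (t, xN N t)) U (𝓝 (∫ t in Icc 0 T, φ (t, x t))) := by
    intro φ hφ
    have := hlim (Ψ := fun z => φ (z.1, z.2.1)) (by fun_prop) measurableSet_Icc le_rfl
    simpa using this
  -- barycenter
  set ub : ℝ → Fin m → ℝ := fun t => ∫ u, u ∂(κ t) with hub
  have hubm : Measurable ub :=
    (StronglyMeasurable.integral_kernel_prod_right (κ := κ) (f := fun _ u => u)
      (measurable_snd.stronglyMeasurable)).measurable
  set u : ℝ → Fin m → ℝ := fun t => vclamp 1 (ub t) with hu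
  have hum' : Measurable u := (vclamp_uc 1).continuous.measurable.comp hubm
  have huU' : ∀ t, u t ∈ Ubox m := fun t => (mem_Ubox_iff _).2 (vclamp_norm zero_le_one _)
  have hiid : ∀ t, (∀ᵐ v ∂(κ t), v ∈ Ubox m) → ∀ ψ : (Fin m → ℝ) → ℝ, Continuous ψ → 
      Integrable ψ (κ t) := by
    intro t ht ψ hψ
    obtain ⟨B, hB⟩ := (isCompact_Ubox m).exists_bound_of_continuousOn hψ.continuousOn
    refine Integrable.of_bound hψ.aestronglyMeasurable B ?_
    filter_upwards [ht] with v hv using hB v hv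
  have hiid' : ∀ t, (∀ᵐ v ∂(κ t), v ∈ Ubox m) → Integrable (fun v : Fin m → ℝ => v) (κ t) := by
    intro t ht
    refine Integrable.of_bound measurable_id.aestronglyMeasurable 1 ?_
    filter_upwards [ht] with v hv using (mem_Ubox_iff v).1 hv
  have hueq : ∀ t, (∀ᵐ v ∂(κ t), v ∈ Ubox m) → u t = ∫ v, v ∂(κ t) := by
    intro t ht
    have hcU : Convex ℝ (Ubox m) := convex_Icc _ _
    have := hcU.integral_mem (isCompact_Ubox m).isClosed ht (hiid' t ht)
    exact vclamp_eq ((mem_Ubox_iff _).1 this)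
  set Ft : ℝ × (Fin n → ℝ) × (Fin m → ℝ) → Fin n → ℝ := fun z => Fvec f g (tclamp T z.1, z.2)
    with hFt
  have hFtc : Continuous Ft := Ftilde_continuous hT.le hf hg
  have hFeq : ∀ t ∈ Icc 0 T, ∀ y v, Fvec f g (t, y, v) = Ft (t, y, v) := by
    intro t ht y v; simp only [hFt]; rw [tclamp_eq ht]
  have hFb : ∀ k, ∀ᵐ t ∂(volume.restrict (Icc 0 T)), 
      ∫ v, Ft (t, x t, v) k ∂(κ t) = Ft (t, x t, u t) k := by
    intro k
    filter_upwards [hκU] with t ht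
    have e1 : ∀ j, (∫ v, v ∂(κ t)) j = ∫ v, v j ∂(κ t) := fun j =>
      eval_integral (fun i => (hiid' t ht).eval i) j
    simp only [hFt, Fvec]
    rw [integral_add (integrable_const _) (integrable_finsetSum _ fun j _ => 
      ((hiid' t ht).eval j).const_mul _), integral_finsetSum _ fun j _ => 
      ((hiid' t ht).eval j).const_mul _]
    simp only [integral_const_mul, integral_const, probReal_univ, one_smul]
    congr 1
    refine Finset.sum_congr rfl fun j _ => ?_
    rw [hueq t ht, e1]
  have hFint : ∀ {y : ℝ → Fin n → ℝ} {w : ℝ → Fin m → ℝ}, Continuous y → Measurable w →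
      (∀ t, w t ∈ Ubox m) → IntegrableOn (fun t => Fvec f g (t, y t, w t)) (Icc 0 T) volume := by
    intro y w hy hw hwU
    refine (integrableOn_traj hFtc hy hw hwU).congr_fun (fun t ht => (hFeq t ht _ _).symm)
      measurableSet_Icc
  have hFcoord : ∀ {y : ℝ → Fin n → ℝ} {w : ℝ → Fin m → ℝ}, Continuous y → Measurable w →
      (∀ t, w t ∈ Ubox m) → ∀ t ∈ Icc 0 T, ∀ k, (∫ s in Icc 0 t, Fvec f g (s, y s, w s)) k 
        = ∫ s in Icc 0 t, Ft (s, y s, w s) k := by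
    intro y w hy hw hwU t ht k
    have hsub : Icc 0 t ⊆ Icc 0 T := Icc_subset_Icc_right ht.2
    rw [eval_integral (fun i => ((hFint hy hw hwU).mono_set hsub).eval i)]
    refine setIntegral_congr_fun measurableSet_Icc fun s hs => ?_
    simp only [hFeq s (hsub hs)]
  refine ⟨x, u, ⟨hum', fun t _ => huU' t, hx0, ?_, ?_, hFint hxc hum' huU', ?_⟩, huU', hxlip,
    hphi, ?_⟩
  · have h1 : Tendsto (fun N => Metric.infDist (xN N T) XT) U (𝓝 (Metric.infDist (x T) XT)) :=
      ((Metric.continuous_infDist_pt XT).tendsto _).comp (hpt T ⟨hT.le, le_rfl⟩)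
    have h2 : Metric.infDist (x T) XT ≤ 0 := le_of_tendsto_of_tendsto' h1 ha hXTd
    exact (hXT.isClosed.mem_iff_infDist_zero hXTne).2 (le_antisymm h2 Metric.infDist_nonneg)
  · have hdc : Continuous (fun t => Metric.infDist (x t) X) :=
      (Metric.continuous_infDist_pt X).comp hxc
    have h1 := hphi (fun z => Metric.infDist z.2 X)
      ((Metric.continuous_infDist_pt X).comp continuous_snd)
    have h2 : ∫ t in Icc 0 T, Metric.infDist (x t) X ≤ 0 := le_of_tendsto_of_tendsto' h1 ha hXd
    have h3 : ∫ t in Icc 0 T, Metric.infDist (x t) X = 0 :=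
      le_antisymm h2 (integral_nonneg fun t => Metric.infDist_nonneg)
    rw [integral_eq_zero_iff_of_nonneg (fun t => Metric.infDist_nonneg)
      (hdc.continuousOn.integrableOn_compact isCompact_Icc)] at h3
    have h4 := Measure.eqOn_Icc_of_ae_eq volume hT.ne h3 hdc.continuousOn continuousOn_const
    intro t ht
    exact (hX.isClosed.mem_iff_infDist_zero hXne).2 (h4 ht)
  · intro t ht
    have hsub : Icc 0 t ⊆ Icc 0 T := Icc_subset_Icc_right ht.2
    ext k
    rw [Pi.add_apply, hFcoord hxc hum' huU' t ht k]
    have h1 := hlim (Ψ := fun z => Ft z k) (by fun_prop) (S := Icc 0 t) measurableSet_Icc hsub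
    have e1 : ∫ s in Icc 0 t, ∫ v, Ft (s, x s, v) k ∂(κ s) = ∫ s in Icc 0 t, Ft (s, x s, u s) k :=
      integral_congr_ae (ae_restrict_of_ae_restrict_of_subset hsub (hFb k))
    rw [e1] at h1
    have h2 : Tendsto (fun N => xN N t k) U (𝓝 (x t k)) :=
      ((continuous_apply k).tendsto _).comp (hpt t ht)
    have h3 := (h2.sub_const (x₀ k)).sub h1
    have h4 : Tendsto (fun N => xN N t k - x₀ k - ∫ s in Icc 0 t, Ft (s, xN N s, uN N s) k) U
        (𝓝 0) := by
      refine squeeze_zero_norm (fun N => ?_) ha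
      refine le_trans ?_ (hdef N t ht)
      rw [← hFcoord (cont_of_lip hM (hlip N)) (hum N) (huU N) t ht k]
      exact norm_le_pi_norm (xN N t - x₀ - ∫ s in Icc 0 t, Fvec f g (s, xN N s, uN N s)) k
    have h5 := tendsto_nhds_unique h3 h4
    linarith
  · intro c c0 hc hJ
    have h1 := hlim hh measurableSet_Icc le_rfl
    have h2 : Tendsto (fun N => H (xN N T)) U (𝓝 (H (x T))) :=
      (hH.tendsto _).comp (hpt T ⟨hT.le, le_rfl⟩)
    have h3 := le_of_tendsto_of_tendsto' (h1.add h2) hc hJ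
    refine le_trans ?_ h3
    unfold Jcost
    gcongr 1
    refine setIntegral_mono_on_ae (integrableOn_traj hh hxc hum' huU')
      (hκ (fun z => h (z.1, x z.1, z.2)) (by fun_prop) _ measurableSet_Icc le_rfl).1
      measurableSet_Icc ?_
    rw [ae_restrict_iff' measurableSet_Icc] at hκU
    filter_upwards [hκU] with t ht htI
    have ht' := ht htI
    rw [hueq t ht']
    exact (hcvx t htI (x t)).map_integral_le (by fun_prop) isClosed_univ (ae_of_all _ fun _ => mem_univ _)
      (hiid' t ht') (hiid t ht' _ (by fun_prop))

lemma exists_adm_le {n m : ℕ} {T M : ℝ} (hT : 0 < T) (hM0 : 0 ≤ M)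
    {X XT : Set (Fin n → ℝ)} (hX : IsCompact X) (hXT : IsCompact XT) (hXTsub : XT ⊆ X)
    (hXne : X.Nonempty) (hXTne : XT.Nonempty) {x₀ : Fin n → ℝ}
    {f : ℝ × (Fin n → ℝ) → Fin n → ℝ} {g : ℝ × (Fin n → ℝ) → Fin n → Fin m → ℝ}
    (hf : ContinuousOn f (Set.Icc (0 : ℝ) T ×ˢ Set.univ))
    (hg : ContinuousOn g (Set.Icc (0 : ℝ) T ×ˢ Set.univ))
    (hM : ∀ z ∈ Set.Icc (0 : ℝ) T ×ˢ X ×ˢ Ubox m, ‖Fvec f g z‖ ≤ M)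
    {h : ℝ × (Fin n → ℝ) × (Fin m → ℝ) → ℝ} {H : (Fin n → ℝ) → ℝ}
    (hh : Continuous h) (hH : Continuous H)
    (hcvx : ∀ t ∈ Icc 0 T, ∀ x : Fin n → ℝ, ConvexOn ℝ Set.univ (fun u => h (t, x, u)))
    {η : Measure (ℝ × (Fin n → ℝ) × (Fin m → ℝ))} {ηT : Measure (Fin n → ℝ)}
    (hηfeas : QFeasible T X XT x₀ f g η ηT) :
    ∃ (x : ℝ → Fin n → ℝ) (u : ℝ → Fin m → ℝ),
      IsAdmissiblePair T X XT x₀ f g x u ∧ (∀ t, u t ∈ Ubox m) ∧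
      (∀ s t, dist (x s) (x t) ≤ M * |s - t|) ∧ Jcost T h H x u ≤ Qcost h H η ηT := by
  have happ := fun N : ℕ => approx_exists hT hX hXT hXTsub hf hg hh hH hM0 hM hηfeas
    (K := (N : ℝ) + 1) (by positivity) (e := 1 / ((N : ℝ) + 1)) (by positivity)
  choose xN uN a hum huU h0 hlip hdef hXd hXTd hJ using happ
  set U : Ultrafilter ℕ := hyperfilter ℕ with hU
  have hUle : (U : Filter ℕ) ≤ atTop := Nat.hyperfilter_le_atTop
  have ha0 : ∀ N, 0 ≤ a N := fun N => Metric.infDist_nonneg.trans (hXTd N)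
  obtain ⟨B, hB⟩ := ((isCompact_Icc (a := (0:ℝ)) (b := T)).prod
      ((isCompact_closedBall x₀ (M * T)).prod
      (isCompact_Ubox m))).exists_bound_of_continuousOn hh.continuousOn
  obtain ⟨B2, hB2⟩ := (isCompact_closedBall x₀ (M * T)).exists_bound_of_continuousOn hH.continuousOn
  have hlow : ∀ N, -(B * T + B2) ≤ Jcost T h H (xN N) (uN N) := by
    intro N
    have hb := bound_of_lip (T := T) hM0 (h0 N) (hlip N)
    have h1 := norm_setIntegral_le_of_norm_le_const (μ := volume) (s := Icc 0 T)
      (f := fun t => h (t, xN N t, uN N t)) (C := B) (by simp)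
      (fun t ht => hB _ ⟨ht, hb t ht, huU N t⟩)
    have h2 := hB2 _ (hb T ⟨hT.le, le_rfl⟩)
    rw [Real.norm_eq_abs, abs_le] at h1 h2
    have h3 : volume.real (Icc 0 T) = T := by simp [Measure.real, hT.le]
    rw [h3] at h1
    unfold Jcost
    linarith [h1.1, h2.1]
  have hone : ∀ N : ℕ, 1 / ((N : ℝ) + 1) ≤ 1 := fun N => by
    rw [div_le_one (by positivity)]
    have : (0:ℝ) ≤ N := by positivity
    linarith
  have hlim1 : Tendsto (fun N : ℕ => 1 / ((N : ℝ) + 1)) U (𝓝 0) :=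
    tendsto_one_div_add_atTop_nhds_zero_nat.mono_left hUle
  have ha : Tendsto a U (𝓝 0) := by
    have h1 := hlim1.const_mul (Qcost h H η ηT + 1 + (B * T + B2))
    rw [mul_zero] at h1
    refine squeeze_zero ha0 (fun N => ?_) h1
    rw [mul_one_div, le_div_iff₀ (by positivity)]
    linarith [hJ N, hlow N, hone N]
  obtain ⟨x, u, hadm, hu, hxl, -, hcost⟩ := compactness hT hM0 hX hXT hXne hXTne hf hg hh hH hcvx h0
    hlip hum huU U ha hdef hXd hXTd
  refine ⟨x, u, hadm, hu, hxl, ?_⟩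
  refine hcost (fun N => Qcost h H η ηT + 1 / ((N : ℝ) + 1)) _ ?_ ?_
  · simpa using hlim1.const_add (Qcost h H η ηT)
  · intro N
    have := hJ N
    have h2 : 0 ≤ ((N : ℝ) + 1) * a N := mul_nonneg (by positivity) (ha0 N)
    linarith

lemma main_ineq {n m : ℕ} {T : ℝ} (hT : 0 < T)
    {X XT : Set (Fin n → ℝ)} (hX : IsCompact X) (hXT : IsCompact XT) (hXTsub : XT ⊆ X)
    {x₀ : Fin n → ℝ}
    {f : ℝ × (Fin n → ℝ) → Fin n → ℝ} {g : ℝ × (Fin n → ℝ) → Fin n → Fin m → ℝ}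
    (hf : ContinuousOn f (Set.Icc (0 : ℝ) T ×ˢ Set.univ))
    (hg : ContinuousOn g (Set.Icc (0 : ℝ) T ×ˢ Set.univ))
    {M : ℝ} (hM0 : 0 ≤ M) (hM : ∀ z ∈ Set.Icc (0 : ℝ) T ×ˢ X ×ˢ Ubox m, ‖Fvec f g z‖ ≤ M)
    {h : ℝ × (Fin n → ℝ) × (Fin m → ℝ) → ℝ} {H : (Fin n → ℝ) → ℝ}
    (hh : Continuous h) (hH : Continuous H)
    {xs : ℝ → Fin n → ℝ} {us : ℝ → Fin m → ℝ}
    (hconv : ∀ (t : ℝ) (x : Fin n → ℝ),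
      ConvexOn ℝ Set.univ (fun u : Fin m → ℝ => h (t, x, u)))
    (hopt : IsAdmissiblePair T X XT x₀ f g xs us)
    (hleast : IsLeast (JVals T X XT x₀ f g h H) (Jcost T h H xs us))
    (huniq : ∀ (x : ℝ → Fin n → ℝ) (u : ℝ → Fin m → ℝ),
      IsAdmissiblePair T X XT x₀ f g x u → Jcost T h H x u = Jcost T h H xs us →
      ∀ᵐ t ∂(volume.restrict (Set.Icc (0 : ℝ) T)), x t = xs t ∧ u t = us t)
    {η : Measure (ℝ × (Fin n → ℝ) × (Fin m → ℝ))} {ηT : Measure (Fin n → ℝ)}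
    (hηfeas : QFeasible T X XT x₀ f g η ηT)
    (hηopt : IsLeast (QVals T X XT x₀ f g h H) (Qcost h H η ηT))
    (b : BoundedContinuousFunction (ℝ × (Fin n → ℝ)) ℝ) :
    ∫ t in Icc 0 T, b (t, xs t) ≤ ∫ z, b (z.1, z.2.1) ∂η := by
  have hXTne : XT.Nonempty := ⟨_, hopt.2.2.2.1⟩
  have hXne : X.Nonempty := hXTne.mono hXTsub
  have hQJ : Qcost h H η ηT ≤ Jcost T h H xs us :=
    hηopt.2 (occ_feasible hT hX hXT hf hg hh hopt)
  have hfin := hηfeas.1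
  have hbz : Continuous (fun z : ℝ × (Fin n → ℝ) × (Fin m → ℝ) => b (z.1, z.2.1)) := by fun_prop
  have ib : Integrable (fun z : ℝ × (Fin n → ℝ) × (Fin m → ℝ) => b (z.1, z.2.1)) η :=
    Integrable.of_bound hbz.aestronglyMeasurable ‖b‖ (ae_of_all _ fun z => b.norm_coe_le_norm _)
  have ih : Integrable h η := by
    have hKc : IsCompact (Set.Icc (0 : ℝ) T ×ˢ X ×ˢ Ubox m) :=
      isCompact_Icc.prod (hX.prod (isCompact_Ubox m))
    have hae : ∀ᵐ z ∂η, z ∈ (Set.Icc (0 : ℝ) T ×ˢ X ×ˢ Ubox m) := hηfeas.2.2.1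
    obtain ⟨B, hB⟩ := hKc.exists_bound_of_continuousOn hh.continuousOn
    refine Integrable.of_bound hh.aestronglyMeasurable B ?_
    filter_upwards [hae] with z hz using hB z hz
  set β := ∫ z, b (z.1, z.2.1) ∂η with hβ
  have hex : ∀ N : ℕ, ∃ (x : ℝ → Fin n → ℝ) (u : ℝ → Fin m → ℝ),
      IsAdmissiblePair T X XT x₀ f g x u ∧ (∀ t, u t ∈ Ubox m) ∧
      (∀ s t, dist (x s) (x t) ≤ M * |s - t|) ∧
      (∫ t in Icc 0 T, b (t, x t)) ≤ β ∧ Jcost T h H x u ≤ Jcost T h H xs us 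
        + (β + ‖b‖ * T) * (1 / ((N : ℝ) + 1)) := by
    intro N
    set ε : ℝ := 1 / ((N : ℝ) + 1) with hε
    have hε0 : 0 < ε := by positivity
    obtain ⟨x, u, hadm, hu, hxl, hc⟩ := exists_adm_le (h := fun z => h z + ε * b (z.1, z.2.1))
      hT hM0 hX hXT hXTsub hXne hXTne hf hg hM (by fun_prop) hH
      (fun t _ y => (hconv t y).add_const (ε * b (t, y))) hηfeas
    have hxc := cont_of_lip hM0 hxl
    have e1 : Qcost (fun z => h z + ε * b (z.1, z.2.1)) H η ηT = Qcost h H η ηT + ε * β := by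
      unfold Qcost
      rw [integral_add ih (ib.const_mul ε), integral_const_mul]
      ring
    have e2 : Jcost T (fun z => h z + ε * b (z.1, z.2.1)) H x u
        = Jcost T h H x u + ε * ∫ t in Icc 0 T, b (t, x t) := by
      unfold Jcost
      have i1 := integrableOn_traj (T := T) hh hxc hadm.1 hu
      have i2 := integrableOn_traj (T := T) hbz hxc hadm.1 hu
      rw [integral_add i1 (i2.const_mul ε), integral_const_mul]
      ring
    rw [e1, e2] at hc
    have hge : Jcost T h H xs us ≤ Jcost T h H x u := hleast.2 ⟨x, u, hadm, rfl⟩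
    have h1 : ε * ∫ t in Icc 0 T, b (t, x t) ≤ ε * β := by linarith
    have h2 := le_of_mul_le_mul_left h1 hε0
    refine ⟨x, u, hadm, hu, hxl, h2, ?_⟩
    have h3 := norm_setIntegral_le_of_norm_le_const (μ := volume) (s := Icc 0 T)
      (f := fun t => b (t, x t)) (C := ‖b‖) (by simp) (fun t ht => b.norm_coe_le_norm _)
    have h4 : volume.real (Icc 0 T) = T := by simp [Measure.real, hT.le]
    rw [h4, Real.norm_eq_abs, abs_le] at h3
    have h5 := mul_le_mul_of_nonneg_left h3.1 hε0.le
    linarith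
  choose xN uN hadm huU hlip hle hJ using hex
  obtain ⟨x, u, hadm', hu', hxl, hphi, hcost⟩ := compactness hT hM0 hX hXT hXne hXTne hf hg hh hH
    (fun t _ => hconv t) (x₀ := x₀) (fun N => (hadm N).2.2.1) hlip (fun N => (hadm N).1) huU
    (hyperfilter ℕ) (a := fun _ => 0) tendsto_const_nhds
    (fun N t ht => by
      rw [(hadm N).2.2.2.2.2.2 t ht]; simp)
    (fun N => by
      refine le_of_eq (setIntegral_eq_zero_of_forall_eq_zero fun t ht => ?_)
      exact Metric.infDist_zero_of_mem ((hadm N).2.2.2.2.1 t ht))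
    (fun N => le_of_eq (Metric.infDist_zero_of_mem (hadm N).2.2.2.1))
  have hlim1 : Tendsto (fun N : ℕ => 1 / ((N : ℝ) + 1)) (hyperfilter ℕ) (𝓝 0) :=
    tendsto_one_div_add_atTop_nhds_zero_nat.mono_left Nat.hyperfilter_le_atTop
  have hJle : Jcost T h H x u ≤ Jcost T h H xs us := by
    refine hcost _ _ ?_ hJ
    simpa using (hlim1.const_mul (β + ‖b‖ * T)).const_add (Jcost T h H xs us)
  have hJeq := le_antisymm hJle (hleast.2 ⟨x, u, hadm', rfl⟩)
  have hae := huniq x u hadm' hJeq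
  have h1 : ∫ t in Icc 0 T, b (t, x t) ≤ β := le_of_tendsto' (hphi b b.continuous) hle
  refine le_trans (le_of_eq ?_) h1
  refine integral_congr_ae ?_
  filter_upwards [hae] with t ht
  rw [ht.1]

end Aux

/-- under convexity of h(t,x,·) and existence of an a.e.-unique optimal
admissible pair (x*,u*), if (η*, η_T*) is an optimal solution of (Q), then the
(t,x)-marginal of η* is the occupation measure of x*, i.e. the pushforward of Lebesgue
measure on [0,T] under t ↦ (t, x*(t)). -/
theorem Q_optimal_marginal_is_occupation
    {n m : ℕ} (hn : 0 < n) (hm : 0 < m) (T : ℝ) (hT : 0 < T)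
    (X XT : Set (Fin n → ℝ)) (hX : IsCompact X) (hXT : IsCompact XT) (hXTsub : XT ⊆ X)
    (x₀ : Fin n → ℝ) (hx₀ : x₀ ∈ X)
    (f : ℝ × (Fin n → ℝ) → Fin n → ℝ) (g : ℝ × (Fin n → ℝ) → Fin n → Fin m → ℝ)
    (hf : ContinuousOn f (Set.Icc (0 : ℝ) T ×ˢ Set.univ))
    (hg : ContinuousOn g (Set.Icc (0 : ℝ) T ×ˢ Set.univ))
    (h : ℝ × (Fin n → ℝ) × (Fin m → ℝ) → ℝ) (H : (Fin n → ℝ) → ℝ)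
    (hh : Continuous h) (hH : Continuous H)
    (xs : ℝ → Fin n → ℝ) (us : ℝ → Fin m → ℝ)
    (hconv : ∀ (t : ℝ) (x : Fin n → ℝ),
      ConvexOn ℝ Set.univ (fun u : Fin m → ℝ => h (t, x, u)))
    (hopt : IsAdmissiblePair T X XT x₀ f g xs us)
    (hleast : IsLeast (JVals T X XT x₀ f g h H) (Jcost T h H xs us))
    (huniq : ∀ (x : ℝ → Fin n → ℝ) (u : ℝ → Fin m → ℝ),
      IsAdmissiblePair T X XT x₀ f g x u → Jcost T h H x u = Jcost T h H xs us →
      ∀ᵐ t ∂(volume.restrict (Set.Icc (0 : ℝ) T)), x t = xs t ∧ u t = us t)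
    (η : Measure (ℝ × (Fin n → ℝ) × (Fin m → ℝ))) (ηT : Measure (Fin n → ℝ))
    (hηfeas : QFeasible T X XT x₀ f g η ηT)
    (hηopt : IsLeast (QVals T X XT x₀ f g h H) (Qcost h H η ηT)) :
    η.map (fun z => (z.1, z.2.1)) =
      Measure.map (fun t => (t, xs t)) (volume.restrict (Set.Icc (0 : ℝ) T)) := by
  obtain ⟨M, hM⟩ := (isCompact_Icc.prod (hX.prod (isCompact_Ubox m))).exists_bound_of_continuousOn
    ((Fvec_continuousOn hf hg).mono (prod_mono le_rfl (subset_univ _)))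
  have hM0 : 0 ≤ M := (norm_nonneg _).trans
    (hM (0, x₀, 0) ⟨⟨le_rfl, hT.le⟩, hx₀, (mem_Ubox_iff _).2 (by simp)⟩)
  have key := main_ineq hT hX hXT hXTsub hf hg hM0 hM hh hH hconv hopt hleast huniq hηfeas hηopt
  have hfin := hηfeas.1
  have hxsc : ContinuousOn xs (Icc 0 T) := by
    have := LipschitzOnWith.of_dist_le_mul (K := ⟨M, hM0⟩) (s := Icc 0 T) (f := xs)
      (fun s hs t ht => adm_bound hM hopt s hs t ht)
    exact this.continuousOn
  have hxm : AEMeasurable xs (volume.restrict (Icc 0 T)) := hxsc.aemeasurable measurableSet_Icc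
  have hpm : AEMeasurable (fun t => (t, xs t)) (volume.restrict (Icc 0 T)) :=
    aemeasurable_id.prodMk hxm
  have hqm : Measurable (fun z : ℝ × (Fin n → ℝ) × (Fin m → ℝ) => (z.1, z.2.1)) := by fun_prop
  refine ext_of_forall_integral_eq_of_IsFiniteMeasure fun b => ?_
  rw [integral_map hqm.aemeasurable b.continuous.aestronglyMeasurable,
    integral_map hpm b.continuous.aestronglyMeasurable]
  refine le_antisymm ?_ (key b)
  have h2 := key (-b)
  simp only [BoundedContinuousFunction.coe_neg, Pi.neg_apply, integral_neg] at h2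
  linarith

end
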